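/- arXiv:math-ph/0601020 — 2 statements merged into one kernel-verified Lean document; each statement's English description precedes it below -/
import Mathlib

section
/- For any n ∈ ℤ, any field F of characteristic 0, and any choice of a, a_+, a_−, a_{n+1}, a_{n−1}, a_k, b_k ∈ F (k ∈ ℤ, |k − n| ≥ 2) with a_{n+1}a_{n−1}(a_{n+1} − a_{n−1}) ≠ 0, setting b_{n±1} := 1/a_{n±1}, c_k := (a_k, b_k) and č_k := 1 − a_k b_k, the first Toeplitz vector field admits a formal Laurent solution (x(t), y(t)) over F in which only x_n(t) and y_n(t) have a (simple) pole, with expansions: (x_k(t), y_k(t)) = c_k + č_k(c_{k+1} − c_{k−1})t + O(t²) for |k − n| ≥ 2; x_{n±1}(t) = a_{n±1} + a_{n±1}a_± t + O(t²), y_{n±1}(t) = 1/a_{n±1} − (a_±/a_{n∓1})t + O(t²); x_n(t) = a_{n−1}a_{n+1}(1 + a·t)/((a_{n−1} − a_{n+1})t) + O(t) and y_n(t) = (−1 + (a + (a_{n+1}a_+ − a_{n−1}a_−)/(a_{n+1} − a_{n−1}))t)/((a_{n−1} − a_{n+1})t) + O(t). Moreover all higher coefficients of the solution are uniquely determined by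 these data. -/
/-!
Common definitions: the matrices `L₁`, `L₂` of the Toeplitz lattice, their powers,
the recursion polynomials `Γ_k` (here `GamA`), `Γ̃_k` (here `GamB`) and their
self-dual version (`GamSD`), together with the notion of formal Laurent
solutions of the (self-dual) Toeplitz lattice.
-/

noncomputable section

namespace SingConf

variable {A : Type*} [CommRing A]

/-- The entry `(L₁)_{ij} = -x_i y_{j-1} + δ_{i+1,j}` (for `j - i ≤ 1`, zero otherwise). -/
def L1e (x y : ℤ → A) (i j : ℤ) : A :=
  if j ≤ i + 1 then -(x i * y (j - 1)) + (if i + 1 = j then 1 else 0) else 0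

/-- The entry `(L₂)_{ij} = -y_j x_{i-1} + δ_{j+1,i}` (for `j - i ≥ -1`, zero otherwise). -/
def L2e (x y : ℤ → A) (i j : ℤ) : A :=
  if i ≤ j + 1 then -(y j * x (i - 1)) + (if j + 1 = i then 1 else 0) else 0

/-- The entry `(L₁^s)_{ij}`; the matrix `L₁` has upper bandwidth 1, so each entry of a
power is a finite sum. -/
def L1pow (x y : ℤ → A) : ℕ → ℤ → ℤ → A
  | 0 => fun i j => if i = j then 1 else 0
  | s + 1 => fun i j => ∑ l ∈ Finset.Icc (j - 1) (i + (s : ℤ)), L1pow x y s i l * L1e x y l j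

/-- The entry `(L₂^s)_{ij}`. -/
def L2pow (x y : ℤ → A) : ℕ → ℤ → ℤ → A
  | 0 => fun i j => if i = j then 1 else 0
  | s + 1 => fun i j => ∑ l ∈ Finset.Icc (i - (s : ℤ)) (j + 1), L2pow x y s i l * L2e x y l j

/-- The recursion polynomial
`Γ_k(x,y;u) = (v_k/y_k)(-(L₁P₁'(L₁))_{k+1,k+1} - (L₂P₂'(L₂))_{k,k}
              + (P₁'(L₁))_{k+1,k} + (P₂'(L₂))_{k,k+1}) + k x_k`
where `P₁(λ) = ∑_{i=1}^N u_i λ^i/i`, `P₂(λ) = ∑_{i=1}^N u_{-i} λ^i/i`, `v_k = 1 - x_k y_k`.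
The apparent denominator `y_k` cancels, thanks to the identities
`(L₁^{i-1})_{k+1,k} - (L₁^i)_{k+1,k+1} = y_k ∑_{l} x_l (L₁^{i-1})_{k+1,l}` and
`(L₂^{i-1})_{k,k+1} - (L₂^i)_{k,k} = y_k ∑_{l} x_{l-1} (L₂^{i-1})_{k,l}`,
which is how the cancellation-free expression below is obtained. -/
def GamA (N : ℕ) (u : ℤ → A) (x y : ℤ → A) (k : ℤ) : A :=
  (1 - x k * y k) *
    ((∑ i ∈ Finset.Icc 1 N, u (i : ℤ) *
        ∑ l ∈ Finset.Icc k (k + (i : ℤ)), x l * L1pow x y (i - 1) (k + 1) l) +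
      ∑ i ∈ Finset.Icc 1 N, u (-(i : ℤ)) *
        ∑ l ∈ Finset.Icc (k - (i : ℤ) + 1) (k + 1), x (l - 1) * L2pow x y (i - 1) k l) +
  (k : A) * x k

/-- The recursion polynomial
`Γ̃_k(x,y;u) = (v_k/x_k)(-(L₁P₁'(L₁))_{k,k} - (L₂P₂'(L₂))_{k+1,k+1}
              + (P₁'(L₁))_{k+1,k} + (P₂'(L₂))_{k,k+1}) + k y_k`,
written in cancellation-free form using
`(L₁^{i-1})_{k+1,k} - (L₁^i)_{k,k} = x_k ∑_{l} y_{l-1} (L₁^{i-1})_{l,k}` and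
`(L₂^{i-1})_{k,k+1} - (L₂^i)_{k+1,k+1} = x_k ∑_{l} y_l (L₂^{i-1})_{l,k+1}`. -/
def GamB (N : ℕ) (u : ℤ → A) (x y : ℤ → A) (k : ℤ) : A :=
  (1 - x k * y k) *
    ((∑ i ∈ Finset.Icc 1 N, u (i : ℤ) *
        ∑ l ∈ Finset.Icc (k - (i : ℤ) + 1) (k + 1), y (l - 1) * L1pow x y (i - 1) l k) +
      ∑ i ∈ Finset.Icc 1 N, u (-(i : ℤ)) *
        ∑ l ∈ Finset.Icc k (k + (i : ℤ)), y l * L2pow x y (i - 1) l (k + 1)) +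
  (k : A) * y k

/-- The self-dual recursion polynomial
`Γ_k(x;u) = (v_k/x_k)(2(P'(L))_{k+1,k} - (LP'(L))_{k+1,k+1} - (LP'(L))_{k,k}) + k x_k`
(where `L = L₁` with `y = x`, `v_k = 1 - x_k²`), in cancellation-free form. -/
def GamSD (N : ℕ) (u : ℕ → A) (x : ℤ → A) (k : ℤ) : A :=
  (1 - x k * x k) *
    (∑ i ∈ Finset.Icc 1 N, u i *
      ((∑ l ∈ Finset.Icc k (k + (i : ℤ)), x l * L1pow x x (i - 1) (k + 1) l) +
        ∑ l ∈ Finset.Icc (k - (i : ℤ) + 1) (k + 1), x (l - 1) * L1pow x x (i - 1) l k)) +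
  (k : A) * x k

variable {K : Type*} [Field K]

/-- `f(t) = O(t^m)` for a formal Laurent series. -/
def BigO (f : LaurentSeries K) (m : ℤ) : Prop := ∀ i < m, f.coeff i = 0

/-- A family `x(t) = (x_k(t))_{k ∈ ℤ}` of formal Laurent series is a solution of the first
vector field of the self-dual Toeplitz lattice: `dx_k/dt = (1 - x_k²)(x_{k+1} - x_{k-1})`;
stated coefficientwise (the coefficient of `t^m` in `dx_k/dt` is `(m+1)·x_k^{(m+1)}`). -/
def IsSolSD (x : ℤ → LaurentSeries K) : Prop :=
  ∀ k m : ℤ, ((m + 1 : ℤ) : K) * (x k).coeff (m + 1) =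
    ((1 - x k * x k) * (x (k + 1) - x (k - 1))).coeff m

/-- A family `(x_k(t), y_k(t))_{k ∈ ℤ}` of formal Laurent series is a solution of the first
Toeplitz vector field: `dx_k/dt = (1 - x_k y_k)(x_{k+1} - x_{k-1})`,
`dy_k/dt = (1 - x_k y_k)(y_{k+1} - y_{k-1})`. -/
def IsSolT (x y : ℤ → LaurentSeries K) : Prop :=
  ∀ k m : ℤ,
    ((m + 1 : ℤ) : K) * (x k).coeff (m + 1) =
      ((1 - x k * y k) * (x (k + 1) - x (k - 1))).coeff m ∧
    ((m + 1 : ℤ) : K) * (y k).coeff (m + 1) =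
      ((1 - x k * y k) * (y (k + 1) - y (k - 1))).coeff m

end SingConf

namespace TP

open PowerSeries

section ode

set_option linter.unusedSectionVars false

variable {F : Type*} [Field F] [CharZero F] {I : Type*}

def Causal (Φ : (I → PowerSeries F) → I → PowerSeries F) : Prop :=
  ∀ (N : ℕ) (z z' : I → PowerSeries F), (∀ i, (X : PowerSeries F) ^ N ∣ z i - z' i) →
    ∀ i, (X : PowerSeries F) ^ N ∣ Φ z i - Φ z' i


lemma exists_prim (c : F) (g : PowerSeries F) :
    ∃ f : PowerSeries F, constantCoeff f = c ∧ d⁄dX F f = g := by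
  refine ⟨PowerSeries.mk (fun m => Nat.casesOn m c (fun m => coeff m g / ((m : F) + 1))), ?_, ?_⟩
  · rw [← coeff_zero_eq_constantCoeff_apply, coeff_mk]; rfl
  · ext m
    rw [coeff_derivative, coeff_mk]
    have : (m : F) + 1 ≠ 0 := by exact_mod_cast Nat.succ_ne_zero m
    simp [this]

lemma dvd_step (N : ℕ) (f g : PowerSeries F) (h0 : constantCoeff f = constantCoeff g)
    (h : (X : PowerSeries F) ^ N ∣ d⁄dX F f - d⁄dX F g) :
    (X : PowerSeries F) ^ (N + 1) ∣ f - g := by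
  rw [X_pow_dvd_iff] at h ⊢
  intro m hm
  cases m with
  | zero => simp [h0]
  | succ m =>
    have := h m (by omega)
    have hm' : (m : F) + 1 ≠ 0 := by exact_mod_cast Nat.succ_ne_zero m
    rw [map_sub, coeff_derivative, coeff_derivative, ← sub_mul] at this
    rw [map_sub]
    exact (mul_eq_zero.mp this).resolve_right hm'

lemma eq_of_dvd (f g : PowerSeries F) (h : ∀ N : ℕ, (X : PowerSeries F) ^ N ∣ f - g) : f = g := by
  ext m
  have := (X_pow_dvd_iff.mp (h (m + 1))) m (by omega)
  rw [map_sub] at this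
  exact sub_eq_zero.mp this

lemma dvd_deriv (N : ℕ) (f g : PowerSeries F)
    (h : (X : PowerSeries F) ^ (N + 1) ∣ f - g) :
    (X : PowerSeries F) ^ N ∣ d⁄dX F f - d⁄dX F g := by
  rw [X_pow_dvd_iff] at h ⊢
  intro m hm
  have := h (m + 1) (by omega)
  rw [map_sub] at this
  rw [map_sub, coeff_derivative, coeff_derivative, ← sub_mul, this, zero_mul]

lemma ode_unique (Φ : (I → PowerSeries F) → I → PowerSeries F) (hΦ : Causal Φ)
    (z z' : I → PowerSeries F) (h0 : ∀ i, constantCoeff (z i) = constantCoeff (z' i))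
    (hz : ∀ i, d⁄dX F (z i) = Φ z i) (hz' : ∀ i, d⁄dX F (z' i) = Φ z' i) : z = z' := by
  have key : ∀ N : ℕ, ∀ i, (X : PowerSeries F) ^ N ∣ z i - z' i := by
    intro N
    induction N with
    | zero => intro i; simp
    | succ N ih =>
      intro i
      apply dvd_step _ _ _ (h0 i)
      rw [hz, hz']
      exact hΦ N z z' ih i
  funext i
  exact eq_of_dvd _ _ (fun N => key N i)

lemma ode_exists (Φ : (I → PowerSeries F) → I → PowerSeries F) (hΦ : Causal Φ) (c : I → F) :
    ∃ z : I → PowerSeries F, (∀ i, constantCoeff (z i) = c i) ∧ ∀ i, d⁄dX F (z i) = Φ z i := by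
  choose prim hp0 hp1 using (exists_prim (F := F))
  let Z : ℕ → I → PowerSeries F := fun N =>
    Nat.rec (fun i => C (c i)) (fun _ w i => prim (c i) (Φ w i)) N
  have Z0 : ∀ N i, constantCoeff (Z N i) = c i := by
    intro N i
    cases N with
    | zero => simp [Z]
    | succ N => simp [Z, hp0]
  have Z1 : ∀ N i, d⁄dX F (Z (N + 1) i) = Φ (Z N) i := by
    intro N i
    simp [Z, hp1]
  clear_value Z
  have hZ : ∀ N i, (X : PowerSeries F) ^ N ∣ Z (N + 1) i - Z N i := by
    intro N
    induction N with
    | zero => intro i; simp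
    | succ N ih =>
      intro i
      apply dvd_step
      · rw [Z0, Z0]
      · rw [Z1, Z1]
        exact hΦ N _ _ ih i
  have hZ' : ∀ N k i, (X : PowerSeries F) ^ N ∣ Z (N + k) i - Z N i := by
    intro N k i
    induction k with
    | zero => simp
    | succ k ih =>
      have h1 := (pow_dvd_pow (X : PowerSeries F) (Nat.le_add_right N k)).trans (hZ (N + k) i)
      have := dvd_add h1 ih
      rwa [sub_add_sub_cancel] at this
  let z : I → PowerSeries F := fun i => PowerSeries.mk (fun m => coeff m (Z (m + 1) i))
  have hz : ∀ N i, (X : PowerSeries F) ^ N ∣ z i - Z N i := by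
    intro N i
    rw [X_pow_dvd_iff]
    intro m hm
    obtain ⟨k, rfl⟩ : ∃ k, N = m + 1 + k := ⟨N - (m + 1), by omega⟩
    have := X_pow_dvd_iff.mp (hZ' (m + 1) k i) m (by omega)
    rw [map_sub, sub_eq_zero] at this
    simp only [z, map_sub, coeff_mk, this, sub_self]
  refine ⟨z, ?_, ?_⟩
  · intro i
    have := X_pow_dvd_iff.mp (hz 1 i) 0 (by omega)
    rw [map_sub, sub_eq_zero, coeff_zero_eq_constantCoeff_apply,
      coeff_zero_eq_constantCoeff_apply, Z0] at this
    exact this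
  · intro i
    apply eq_of_dvd
    intro N
    have h1 := dvd_deriv N _ _ (hz (N + 1) i)
    rw [Z1] at h1
    have h2 := hΦ N _ _ (hz N) i
    have := dvd_sub h1 h2
    rwa [sub_sub_sub_cancel_right] at this

end ode

section laurent

variable {F : Type*} [Field F]

def sg (F : Type*) [Field F] : LaurentSeries F := HahnSeries.single (-1) 1

lemma sg_mul_X : sg F * ((X : PowerSeries F) : LaurentSeries F) = 1 := by
  rw [PowerSeries.coe_X, sg, HahnSeries.single_mul_single]
  simp

lemma sg_mul_coeff (f : LaurentSeries F) (m : ℤ) : (sg F * f).coeff m = f.coeff (m + 1) := by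
  have := HahnSeries.coeff_single_mul (r := (1 : F)) (x := f) (a := m) (b := -1)
  rw [sg, this]; simp

lemma coe_coeff_neg (g : PowerSeries F) (m : ℤ) (hm : m < 0) :
    (g : LaurentSeries F).coeff m = 0 := by
  rw [PowerSeries.coeff_coe, if_pos hm]

lemma coe_coeff_nat (g : PowerSeries F) (m : ℕ) :
    (g : LaurentSeries F).coeff (m : ℤ) = coeff m g := by
  exact LaurentSeries.coeff_coe_powerSeries g m

lemma exists_coe (f : LaurentSeries F) (h : SingConf.BigO f 0) :
    ∃ g : PowerSeries F, f = (g : LaurentSeries F) := by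
  refine ⟨PowerSeries.mk (fun m => f.coeff (m : ℤ)), ?_⟩
  ext m
  rcases lt_or_ge m 0 with hm | hm
  · rw [coe_coeff_neg _ _ hm, h m hm]
  · obtain ⟨k, rfl⟩ := Int.eq_ofNat_of_zero_le hm
    rw [coe_coeff_nat, coeff_mk]

lemma exists_coe' (f : LaurentSeries F) (h : SingConf.BigO f (-1)) :
    ∃ g : PowerSeries F, f = sg F * (g : LaurentSeries F) := by
  obtain ⟨g, hg⟩ := exists_coe (((X : PowerSeries F) : LaurentSeries F) * f) (by
    intro i hi
    rw [PowerSeries.coe_X, HahnSeries.coeff_single_mul, h _ (by omega), mul_zero])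
  refine ⟨g, ?_⟩
  rw [← hg, ← mul_assoc, sg_mul_X, one_mul]

lemma bigO_coe (g : PowerSeries F) : SingConf.BigO (g : LaurentSeries F) 0 :=
  fun i hi => coe_coeff_neg g i hi

lemma bigO_sg (g : PowerSeries F) : SingConf.BigO (sg F * (g : LaurentSeries F)) (-1) :=
  fun i hi => by rw [sg_mul_coeff, coe_coeff_neg g _ (by omega)]

lemma coe_inj {f g : PowerSeries F} (h : (f : LaurentSeries F) = (g : LaurentSeries F)) : f = g :=
  HahnSeries.ofPowerSeries_injective h

lemma deriv_coe (g : PowerSeries F) (m : ℤ) :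
    ((m + 1 : ℤ) : F) * (g : LaurentSeries F).coeff (m + 1) =
      ((d⁄dX F g : PowerSeries F) : LaurentSeries F).coeff m := by
  rcases lt_trichotomy m (-1) with hm | hm | hm
  · rw [coe_coeff_neg _ _ (by omega), coe_coeff_neg _ _ (by omega), mul_zero]
  · subst hm
    rw [coe_coeff_neg _ (-1) (by omega)]; simp
  · obtain ⟨k, rfl⟩ := Int.eq_ofNat_of_zero_le (show 0 ≤ m by omega)
    rw [coe_coeff_nat, coeff_derivative]
    have := coe_coeff_nat g (k + 1)
    push_cast at this ⊢
    rw [this, mul_comm]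

lemma deriv_sg (V : PowerSeries F) (m : ℤ) :
    ((m + 1 : ℤ) : F) * (sg F * (V : LaurentSeries F)).coeff (m + 1) =
      (sg F * (sg F * ((X * d⁄dX F V - V : PowerSeries F) : LaurentSeries F))).coeff m := by
  rw [sg_mul_coeff, sg_mul_coeff, sg_mul_coeff, PowerSeries.coe_sub, HahnSeries.coeff_sub,
    PowerSeries.coe_mul]
  have h1 : (((X : PowerSeries F) : LaurentSeries F) *
      ((d⁄dX F V : PowerSeries F) : LaurentSeries F)).coeff (m + 1 + 1) =
      ((d⁄dX F V : PowerSeries F) : LaurentSeries F).coeff (m + 1) := by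
    rw [PowerSeries.coe_X, HahnSeries.coeff_single_mul, one_mul]
    congr 1; ring
  rw [h1, ← deriv_coe]
  push_cast
  ring

/-- Lifting a family of power series to a family of Laurent series with a simple pole at `n`. -/
def lift (n : ℤ) (x : ℤ → PowerSeries F) (k : ℤ) : LaurentSeries F :=
  if k = n then sg F * (x k : LaurentSeries F) else (x k : LaurentSeries F)

lemma lift_n (n : ℤ) (x : ℤ → PowerSeries F) : lift n x n = sg F * (x n : LaurentSeries F) := by
  simp [lift]

lemma lift_ne (n : ℤ) (x : ℤ → PowerSeries F) (k : ℤ) (h : k ≠ n) :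
    lift n x k = (x k : LaurentSeries F) := by
  simp [lift, h]

/-- The equations in terms of power series. -/
structure PSol (n : ℤ) (x y : ℤ → PowerSeries F) : Prop where
  x0 : X * d⁄dX F (x n) - x n = (X ^ 2 - x n * y n) * (x (n + 1) - x (n - 1))
  y0 : X * d⁄dX F (y n) - y n = (X ^ 2 - x n * y n) * (y (n + 1) - y (n - 1))
  xp : X * d⁄dX F (x (n + 1)) = (1 - x (n + 1) * y (n + 1)) * (X * x (n + 2) - x n)
  yp : X * d⁄dX F (y (n + 1)) = (1 - x (n + 1) * y (n + 1)) * (X * y (n + 2) - y n)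
  xm : X * d⁄dX F (x (n - 1)) = (1 - x (n - 1) * y (n - 1)) * (x n - X * x (n - 2))
  ym : X * d⁄dX F (y (n - 1)) = (1 - x (n - 1) * y (n - 1)) * (y n - X * y (n - 2))
  xk : ∀ k, 2 ≤ |k - n| → d⁄dX F (x k) = (1 - x k * y k) * (x (k + 1) - x (k - 1))
  yk : ∀ k, 2 ≤ |k - n| → d⁄dX F (y k) = (1 - x k * y k) * (y (k + 1) - y (k - 1))

lemma X_ne : ((X : PowerSeries F) : LaurentSeries F) ≠ 0 := by
  intro h
  have := sg_mul_X (F := F)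
  rw [h, mul_zero] at this
  exact zero_ne_one this

lemma eqn_n (V Q P M : PowerSeries F) (S : LaurentSeries F)
    (hS : S = sg F * (sg F * (Q : LaurentSeries F))) :
    (∀ i : ℤ, ((i + 1 : ℤ) : F) * (sg F * (V : LaurentSeries F)).coeff (i + 1) =
      ((1 - S) * ((P : LaurentSeries F) - (M : LaurentSeries F))).coeff i) ↔
    X * d⁄dX F V - V = (X ^ 2 - Q) * (P - M) := by
  have h := sg_mul_X (F := F)
  have hx := X_ne (F := F)
  have e : ((1 - S) * ((P : LaurentSeries F) - (M : LaurentSeries F))) =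
      sg F * (sg F * (((X ^ 2 - Q) * (P - M) : PowerSeries F) : LaurentSeries F)) := by
    rw [hS]
    push_cast
    linear_combination (-(sg F * ((X : PowerSeries F) : LaurentSeries F)) - 1) *
      ((P : LaurentSeries F) - (M : LaurentSeries F)) * h
  have hs : sg F ≠ 0 := left_ne_zero_of_mul_eq_one h
  simp only [deriv_sg, e]
  constructor
  · intro H
    exact coe_inj (mul_left_cancel₀ hs (mul_left_cancel₀ hs (HahnSeries.ext (funext H))))
  · intro H i
    rw [H]

lemma eqn_k (V Q : PowerSeries F) :
    (∀ i : ℤ, ((i + 1 : ℤ) : F) * (V : LaurentSeries F).coeff (i + 1) =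
      (Q : LaurentSeries F).coeff i) ↔ d⁄dX F V = Q := by
  simp only [deriv_coe]
  constructor
  · intro H
    exact coe_inj (HahnSeries.ext (funext H))
  · intro H i
    rw [H]

lemma eqn_pm (V Q : PowerSeries F) (S : LaurentSeries F)
    (hS : ((X : PowerSeries F) : LaurentSeries F) * S = (Q : LaurentSeries F)) :
    (∀ i : ℤ, ((i + 1 : ℤ) : F) * (V : LaurentSeries F).coeff (i + 1) =
      S.coeff i) ↔ X * d⁄dX F V = Q := by
  simp only [deriv_coe]
  constructor
  · intro H
    apply coe_inj
    rw [PowerSeries.coe_mul, ← hS, HahnSeries.ext (funext H)]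
  · intro H i
    rw [← H, PowerSeries.coe_mul] at hS
    rw [mul_left_cancel₀ X_ne hS]

lemma isSol_lift (n : ℤ) (x y : ℤ → PowerSeries F) :
    SingConf.IsSolT (lift n x) (lift n y) ↔ PSol n x y := by
  have h := sg_mul_X (F := F)
  have a1 : n + 1 ≠ n := by omega
  have a2 : n - 1 ≠ n := by omega
  have a3 : n + 1 + 1 ≠ n := by omega
  have a4 : n - 1 - 1 ≠ n := by omega
  have b0 : ∀ z : ℤ → PowerSeries F, (∀ i : ℤ, ((i + 1 : ℤ) : F) * (lift n z n).coeff (i + 1) =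
      ((1 - lift n x n * lift n y n) * (lift n z (n + 1) - lift n z (n - 1))).coeff i) ↔
      X * d⁄dX F (z n) - z n = (X ^ 2 - x n * y n) * (z (n + 1) - z (n - 1)) := by
    intro z
    rw [lift_n, lift_n, lift_n, lift_ne _ _ _ a1, lift_ne _ _ _ a2]
    apply eqn_n
    push_cast; ring
  have bp : ∀ z : ℤ → PowerSeries F, (∀ i : ℤ, ((i + 1 : ℤ) : F) *
      (lift n z (n + 1)).coeff (i + 1) = ((1 - lift n x (n + 1) * lift n y (n + 1)) *
        (lift n z (n + 1 + 1) - lift n z (n + 1 - 1))).coeff i) ↔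
      X * d⁄dX F (z (n + 1)) = (1 - x (n + 1) * y (n + 1)) * (X * z (n + 2) - z n) := by
    intro z
    rw [lift_ne _ _ _ a1, lift_ne _ _ _ a1, lift_ne _ _ _ a1, lift_ne _ _ _ a3,
      show n + 1 - 1 = n by ring, lift_n, show n + 1 + 1 = n + 2 by ring]
    apply eqn_pm
    push_cast
    linear_combination (-(1 - (x (n + 1) : LaurentSeries F) * (y (n + 1) : LaurentSeries F)) *
      (z n : LaurentSeries F)) * h
  have bm : ∀ z : ℤ → PowerSeries F, (∀ i : ℤ, ((i + 1 : ℤ) : F) *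
      (lift n z (n - 1)).coeff (i + 1) = ((1 - lift n x (n - 1) * lift n y (n - 1)) *
        (lift n z (n - 1 + 1) - lift n z (n - 1 - 1))).coeff i) ↔
      X * d⁄dX F (z (n - 1)) = (1 - x (n - 1) * y (n - 1)) * (z n - X * z (n - 2)) := by
    intro z
    rw [lift_ne _ _ _ a2, lift_ne _ _ _ a2, lift_ne _ _ _ a2, lift_ne _ _ _ a4,
      show n - 1 + 1 = n by ring, lift_n, show n - 1 - 1 = n - 2 by ring]
    apply eqn_pm
    push_cast
    linear_combination ((1 - (x (n - 1) : LaurentSeries F) * (y (n - 1) : LaurentSeries F)) *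
      (z n : LaurentSeries F)) * h
  have bk : ∀ z : ℤ → PowerSeries F, ∀ k, 2 ≤ |k - n| → ((∀ i : ℤ, ((i + 1 : ℤ) : F) *
      (lift n z k).coeff (i + 1) = ((1 - lift n x k * lift n y k) *
        (lift n z (k + 1) - lift n z (k - 1))).coeff i) ↔
      d⁄dX F (z k) = (1 - x k * y k) * (z (k + 1) - z (k - 1))) := by
    intro z k hk
    have c0 : k ≠ n := by rintro rfl; simp at hk
    have c1 : k + 1 ≠ n := by rintro rfl; simp at hk
    have c2 : k - 1 ≠ n := by rintro rfl; simp at hk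
    rw [lift_ne _ _ _ c0, lift_ne _ _ _ c0, lift_ne _ _ _ c0, lift_ne _ _ _ c1, lift_ne _ _ _ c2,
      ← eqn_k]
    push_cast
    rfl
  constructor
  · intro H
    exact ⟨(b0 x).1 fun i => (H n i).1, (b0 y).1 fun i => (H n i).2,
      (bp x).1 fun i => (H (n + 1) i).1, (bp y).1 fun i => (H (n + 1) i).2,
      (bm x).1 fun i => (H (n - 1) i).1, (bm y).1 fun i => (H (n - 1) i).2,
      fun k hk => (bk x k hk).1 fun i => (H k i).1, fun k hk => (bk y k hk).1 fun i => (H k i).2⟩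
  · intro H k i
    rcases eq_or_ne k n with rfl | h0
    · exact ⟨(b0 x).2 H.x0 i, (b0 y).2 H.y0 i⟩
    rcases eq_or_ne k (n + 1) with rfl | h1
    · exact ⟨(bp x).2 H.xp i, (bp y).2 H.yp i⟩
    rcases eq_or_ne k (n - 1) with rfl | h2
    · exact ⟨(bm x).2 H.xm i, (bm y).2 H.ym i⟩
    have hk : 2 ≤ |k - n| := by
      rw [le_abs]; omega
    exact ⟨(bk x k hk).2 (H.xk k hk) i, (bk y k hk).2 (H.yk k hk) i⟩

end laurent

end TP
namespace TP

open PowerSeries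

section regular

set_option linter.unusedSectionVars false

variable {F : Type*} [Field F] [CharZero F]

/-- The regularized system; `x n` plays the role of `u = 1/x_n`, `y n` of `r = y_n/x_n`. -/
structure RSol (n : ℤ) (x y : ℤ → PowerSeries F) (wp wm p q : PowerSeries F) : Prop where
  du : d⁄dX F (x n) = (y n - x n ^ 2) * (x (n + 1) - x (n - 1))
  dr : d⁄dX F (y n) = (x n ^ 2 - y n) * (p - q)
  xp : d⁄dX F (x (n + 1)) = wp * (x n * x (n + 2) - 1)
  yp : d⁄dX F (y (n + 1)) = wp * (x n * y (n + 2) - y n)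
  xm : d⁄dX F (x (n - 1)) = wm * (1 - x n * x (n - 2))
  ym : d⁄dX F (y (n - 1)) = wm * (y n - x n * y (n - 2))
  dwp : d⁄dX F wp = wp * (-(x (n + 2) * y (n + 1)) - x (n + 1) * y (n + 2)
      + x n * (x (n + 1) - x (n - 1)) + p)
  dwm : d⁄dX F wm = wm * (x (n - 2) * y (n - 1) + x (n - 1) * y (n - 2)
      + x n * (x (n + 1) - x (n - 1)) - q)
  dp : d⁄dX F p = wp * y (n + 2) - y n * wm * x (n - 2) + x n * (wm - wp)
  dq : d⁄dX F q = -(wm * y (n - 2)) + y n * wp * x (n + 2) + x n * (wm - wp)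
  xk : ∀ k, 2 ≤ |k - n| → d⁄dX F (x k) = (1 - x k * y k) * (x (k + 1) - x (k - 1))
  yk : ∀ k, 2 ≤ |k - n| → d⁄dX F (y k) = (1 - x k * y k) * (y (k + 1) - y (k - 1))

inductive Idx : Type
  | x (k : ℤ) : Idx
  | y (k : ℤ) : Idx
  | wp : Idx
  | wm : Idx
  | p : Idx
  | q : Idx

open Idx in
def Phi (n : ℤ) (z : Idx → PowerSeries F) : Idx → PowerSeries F
  | x k => if k = n then (z (y n) - z (x n) ^ 2) * (z (x (n + 1)) - z (x (n - 1)))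
      else if k = n + 1 then z wp * (z (x n) * z (x (n + 2)) - 1)
      else if k = n - 1 then z wm * (1 - z (x n) * z (x (n - 2)))
      else (1 - z (x k) * z (y k)) * (z (x (k + 1)) - z (x (k - 1)))
  | y k => if k = n then (z (x n) ^ 2 - z (y n)) * (z p - z q)
      else if k = n + 1 then z wp * (z (x n) * z (y (n + 2)) - z (y n))
      else if k = n - 1 then z wm * (z (y n) - z (x n) * z (y (n - 2)))
      else (1 - z (x k) * z (y k)) * (z (y (k + 1)) - z (y (k - 1)))
  | wp => z wp * (-(z (x (n + 2)) * z (y (n + 1))) - z (x (n + 1)) * z (y (n + 2))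
      + z (x n) * (z (x (n + 1)) - z (x (n - 1))) + z p)
  | wm => z wm * (z (x (n - 2)) * z (y (n - 1)) + z (x (n - 1)) * z (y (n - 2))
      + z (x n) * (z (x (n + 1)) - z (x (n - 1))) - z q)
  | p => z wp * z (y (n + 2)) - z (y n) * z wm * z (x (n - 2)) + z (x n) * (z wm - z wp)
  | q => -(z wm * z (y (n - 2))) + z (y n) * z wp * z (x (n + 2)) + z (x n) * (z wm - z wp)

lemma causal_Phi (n : ℤ) : Causal (Phi (F := F) n) := by
  intro N z z' h i
  have h' : ∀ i, Ideal.Quotient.mk (Ideal.span {(X : PowerSeries F) ^ N}) (z i) =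
      Ideal.Quotient.mk (Ideal.span {(X : PowerSeries F) ^ N}) (z' i) := by
    intro i
    rw [Ideal.Quotient.eq, Ideal.mem_span_singleton]
    exact h i
  rw [← Ideal.mem_span_singleton, ← Ideal.Quotient.eq]
  cases i <;> simp only [Phi] <;> (try split_ifs) <;>
    simp only [map_mul, map_sub, map_add, map_neg, map_pow, map_one, h']

def pack (x y : ℤ → PowerSeries F) (wp wm p q : PowerSeries F) : Idx → PowerSeries F
  | .x k => x k
  | .y k => y k
  | .wp => wp
  | .wm => wm
  | .p => p
  | .q => q

lemma abs_of_ne {k n : ℤ} (h0 : k ≠ n) (h1 : k ≠ n + 1) (h2 : k ≠ n - 1) : 2 ≤ |k - n| := by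
  rw [le_abs]; omega

lemma ne_of_abs {k n : ℤ} (h : 2 ≤ |k - n|) : k ≠ n ∧ k ≠ n + 1 ∧ k ≠ n - 1 ∧
    k + 1 ≠ n ∧ k - 1 ≠ n := by
  rw [le_abs] at h; omega

lemma rsol_pack (n : ℤ) (z : Idx → PowerSeries F) :
    RSol n (fun k => z (.x k)) (fun k => z (.y k)) (z .wp) (z .wm) (z .p) (z .q) ↔
      ∀ i, d⁄dX F (z i) = Phi n z i := by
  have a1 : n + 1 ≠ n := by omega
  have a2 : n - 1 ≠ n := by omega
  have a3 : n - 1 ≠ n + 1 := by omega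
  constructor
  · intro H i
    cases i with
    | x k =>
      simp only [Phi]
      split_ifs with h0 h1 h2
      · rw [h0]; exact H.du
      · rw [h1]; exact H.xp
      · rw [h2]; exact H.xm
      · exact H.xk k (abs_of_ne h0 h1 h2)
    | y k =>
      simp only [Phi]
      split_ifs with h0 h1 h2
      · rw [h0]; exact H.dr
      · rw [h1]; exact H.yp
      · rw [h2]; exact H.ym
      · exact H.yk k (abs_of_ne h0 h1 h2)
    | wp => exact H.dwp
    | wm => exact H.dwm
    | p => exact H.dp
    | q => exact H.dq
  · intro H
    refine ⟨?_, ?_, ?_, ?_, ?_, ?_, H .wp, H .wm, H .p, H .q, ?_, ?_⟩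
    · simpa [Phi] using H (.x n)
    · simpa [Phi] using H (.y n)
    · simpa [Phi] using H (.x (n + 1))
    · simpa [Phi] using H (.y (n + 1))
    · simpa [Phi, a3] using H (.x (n - 1))
    · simpa [Phi, a3] using H (.y (n - 1))
    · intro k hk
      obtain ⟨h0, h1, h2, -⟩ := ne_of_abs hk
      simpa [Phi, h0, h1, h2] using H (.x k)
    · intro k hk
      obtain ⟨h0, h1, h2, -⟩ := ne_of_abs hk
      simpa [Phi, h0, h1, h2] using H (.y k)

lemma rsol_exists (n : ℤ) (a b : ℤ → F) (wp0 wm0 p0 q0 : F) :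
    ∃ (x y : ℤ → PowerSeries F) (wp wm p q : PowerSeries F), RSol n x y wp wm p q ∧
      (∀ k, constantCoeff (x k) = a k) ∧ (∀ k, constantCoeff (y k) = b k) ∧
      constantCoeff wp = wp0 ∧ constantCoeff wm = wm0 ∧ constantCoeff p = p0 ∧
      constantCoeff q = q0 := by
  obtain ⟨z, h0, h1⟩ := ode_exists (Phi n) (causal_Phi (F := F) n)
    (fun i => match i with
      | .x k => a k
      | .y k => b k
      | .wp => wp0
      | .wm => wm0
      | .p => p0
      | .q => q0)
  exact ⟨_, _, _, _, _, _, (rsol_pack n z).2 h1, fun k => h0 (.x k), fun k => h0 (.y k),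
    h0 .wp, h0 .wm, h0 .p, h0 .q⟩

lemma rsol_unique (n : ℤ) (x y x' y' : ℤ → PowerSeries F) (wp wm p q wp' wm' p' q' : PowerSeries F)
    (H : RSol n x y wp wm p q) (H' : RSol n x' y' wp' wm' p' q')
    (hx : ∀ k, constantCoeff (x k) = constantCoeff (x' k))
    (hy : ∀ k, constantCoeff (y k) = constantCoeff (y' k))
    (hwp : constantCoeff wp = constantCoeff wp') (hwm : constantCoeff wm = constantCoeff wm')
    (hp : constantCoeff p = constantCoeff p') (hq : constantCoeff q = constantCoeff q') :
    x = x' ∧ y = y' := by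
  have := ode_unique (Phi n) (causal_Phi (F := F) n) (pack x y wp wm p q)
    (pack x' y' wp' wm' p' q')
    (by
      intro i
      cases i with
      | x k => exact hx k
      | y k => exact hy k
      | wp => exact hwp
      | wm => exact hwm
      | p => exact hp
      | q => exact hq)
    ((rsol_pack n (pack x y wp wm p q)).1 H) ((rsol_pack n (pack x' y' wp' wm' p' q')).1 H')
  exact ⟨funext fun k => congrFun this (.x k), funext fun k => congrFun this (.y k)⟩

/-- The constraints. -/
structure Constr (n : ℤ) (x y : ℤ → PowerSeries F) (wp wm p q : PowerSeries F) : Prop where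
  e1 : 1 - x (n + 1) * y (n + 1) - x n * wp = 0
  e2 : 1 - x (n - 1) * y (n - 1) - x n * wm = 0
  e3 : y (n + 1) + y n * x (n - 1) - x n * p = 0
  e4 : y (n - 1) + y n * x (n + 1) - x n * q = 0
  e5 : p * x (n + 1) - q * x (n - 1) - (wm - wp) = 0

def Psi (c1 c2 c3 c4 c5 : PowerSeries F) (e : Fin 5 → PowerSeries F) : Fin 5 → PowerSeries F :=
  ![c1 * e 2, c2 * e 3, c3 * e 4, c3 * e 4, c4 * e 2 + c5 * e 3]

lemma causal_Psi (c1 c2 c3 c4 c5 : PowerSeries F) : Causal (Psi c1 c2 c3 c4 c5) := by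
  intro N z z' h i
  have h' : ∀ i, Ideal.Quotient.mk (Ideal.span {(X : PowerSeries F) ^ N}) (z i) =
      Ideal.Quotient.mk (Ideal.span {(X : PowerSeries F) ^ N}) (z' i) := by
    intro i
    rw [Ideal.Quotient.eq, Ideal.mem_span_singleton]
    exact h i
  rw [← Ideal.mem_span_singleton, ← Ideal.Quotient.eq]
  fin_cases i <;> simp [Psi, map_mul, map_add, h']

lemma constr_of_rsol (n : ℤ) (x y : ℤ → PowerSeries F) (wp wm p q : PowerSeries F)
    (H : RSol n x y wp wm p q)
    (h1 : constantCoeff (1 - x (n + 1) * y (n + 1) - x n * wp) = 0)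
    (h2 : constantCoeff (1 - x (n - 1) * y (n - 1) - x n * wm) = 0)
    (h3 : constantCoeff (y (n + 1) + y n * x (n - 1) - x n * p) = 0)
    (h4 : constantCoeff (y (n - 1) + y n * x (n + 1) - x n * q) = 0)
    (h5 : constantCoeff (p * x (n + 1) - q * x (n - 1) - (wm - wp)) = 0) :
    Constr n x y wp wm p q := by
  have := ode_unique (Psi wp (-wm) (x n ^ 2 - y n) (-(x (n + 2) * wp)) (-(x (n - 2) * wm)))
    (causal_Psi (F := F) _ _ _ _ _)
    ![1 - x (n + 1) * y (n + 1) - x n * wp, 1 - x (n - 1) * y (n - 1) - x n * wm,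
      y (n + 1) + y n * x (n - 1) - x n * p, y (n - 1) + y n * x (n + 1) - x n * q,
      p * x (n + 1) - q * x (n - 1) - (wm - wp)] (fun _ => 0)
    (by
      intro i
      rw [map_zero]
      fin_cases i
      · exact h1
      · exact h2
      · exact h3
      · exact h4
      · exact h5)
    (by
      intro i
      fin_cases i <;>
        simp only [Psi, map_sub, map_add, Derivation.leibniz, smul_eq_mul, derivative_one, H.du, H.dr,
          H.xp, H.yp, H.xm, H.ym, H.dwp, H.dwm, H.dp, H.dq, Fin.isValue, Fin.zero_eta, Fin.mk_one,
          Fin.reduceFinMk, Matrix.cons_val_zero, Matrix.cons_val_one, Matrix.cons_val] <;>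
        ring)
    (by
      intro i
      rw [map_zero]
      fin_cases i <;> simp [Psi])
  exact ⟨congrFun this 0, congrFun this 1, congrFun this 2, congrFun this 3, congrFun this 4⟩

lemma psol_of_rsol (n : ℤ) (x y : ℤ → PowerSeries F) (wp wm p q U V : PowerSeries F)
    (H : RSol n x y wp wm p q) (hc : Constr n x y wp wm p q) (hU : x n = X * U) (hV : U * V = 1) :
    PSol n (Function.update x n V) (Function.update y n (y n * V)) := by
  have a1 : n + 1 ≠ n := by omega
  have a2 : n - 1 ≠ n := by omega
  have a3 : n + 2 ≠ n := by omega
  have a4 : n - 2 ≠ n := by omega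
  have hV' : U * d⁄dX F V + V * d⁄dX F U = 0 := by
    have := congrArg (d⁄dX F) hV
    simpa [Derivation.leibniz] using this
  have hu : U + X * d⁄dX F U = (y n - x n ^ 2) * (x (n + 1) - x (n - 1)) := by
    rw [← H.du, hU]
    simp [Derivation.leibniz]; ring
  have hx0 : X * d⁄dX F V - V = (X ^ 2 - V * (y n * V)) * (x (n + 1) - x (n - 1)) := by
    rw [hU] at hu
    linear_combination (-V ^ 2) * hu + X * V * hV' +
      (V - X * d⁄dX F V + X ^ 2 * (x (n + 1) - x (n - 1)) * (U * V + 1)) * hV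
  have e1 := hc.e1
  have e2 := hc.e2
  have e3 := hc.e3
  have e4 := hc.e4
  have hxn := hU
  constructor
  · simpa [Function.update_of_ne, a1, a2] using hx0
  · simp only [Function.update_self, Function.update_of_ne a1, Function.update_of_ne a2,
      Derivation.leibniz, smul_eq_mul, H.dr]
    rw [hU] at e3 e4 ⊢
    linear_combination y n * hx0 + (X ^ 2 - y n * V ^ 2) * (e4 - e3) +
      (p - q) * X * (X ^ 2 * U + y n * V) * hV
  · simp only [Function.update_self, Function.update_of_ne a1, Function.update_of_ne a3, H.xp]
    rw [hU] at e1 ⊢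
    linear_combination (-(X * x (n + 2) - V)) * e1 + X * wp * hV
  · simp only [Function.update_self, Function.update_of_ne a1, Function.update_of_ne a3, H.yp]
    rw [hU] at e1 ⊢
    linear_combination (-(X * y (n + 2) - y n * V)) * e1 + X * wp * y n * hV
  · simp only [Function.update_self, Function.update_of_ne a2, Function.update_of_ne a4, H.xm]
    rw [hU] at e2 ⊢
    linear_combination (-(V - X * x (n - 2))) * e2 - X * wm * hV
  · simp only [Function.update_self, Function.update_of_ne a2, Function.update_of_ne a4, H.ym]
    rw [hU] at e2 ⊢
    linear_combination (-(y n * V - X * y (n - 2))) * e2 - X * wm * y n * hV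
  · intro k hk
    obtain ⟨h0, h1, h2, h3, h4⟩ := ne_of_abs hk
    simpa [Function.update_of_ne, h0, h3, h4] using H.xk k hk
  · intro k hk
    obtain ⟨h0, h1, h2, h3, h4⟩ := ne_of_abs hk
    simpa [Function.update_of_ne, h0, h3, h4] using H.yk k hk

lemma rsol_of_psol (n : ℤ) (x y : ℤ → PowerSeries F) (U : PowerSeries F)
    (H : PSol n x y) (hU : x n * U = 1)
    (h1 : constantCoeff (1 - x (n + 1) * y (n + 1)) = 0)
    (h2 : constantCoeff (1 - x (n - 1) * y (n - 1)) = 0)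
    (h3 : constantCoeff (y (n + 1) + y n * U * x (n - 1)) = 0)
    (h4 : constantCoeff (y (n - 1) + y n * U * x (n + 1)) = 0) :
    ∃ wp wm p q, RSol n (Function.update x n (X * U)) (Function.update y n (y n * U)) wp wm p q ∧
      p * x (n + 1) - q * x (n - 1) - (wm - wp) = 0 := by
  have a1 : n + 1 ≠ n := by omega
  have a2 : n - 1 ≠ n := by omega
  have a3 : n + 2 ≠ n := by omega
  have a4 : n - 2 ≠ n := by omega
  obtain ⟨kp, hkp⟩ := X_dvd_iff.mpr h1
  obtain ⟨km, hkm⟩ := X_dvd_iff.mpr h2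
  obtain ⟨lp, hlp⟩ := X_dvd_iff.mpr h3
  obtain ⟨lm, hlm⟩ := X_dvd_iff.mpr h4
  set V := x n with hVdef
  have hX : (X : PowerSeries F) ≠ 0 := X_ne_zero
  have hU0 : U ≠ 0 := right_ne_zero_of_mul_eq_one hU
  obtain ⟨u, hu⟩ : ∃ u, u = X * U := ⟨_, rfl⟩
  have hu0 : u ≠ 0 := by rw [hu]; exact mul_ne_zero hX hU0
  obtain ⟨r, hr⟩ : ∃ r, r = y n * U := ⟨_, rfl⟩
  obtain ⟨wp, hwp⟩ : ∃ w, w = kp * V := ⟨_, rfl⟩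
  obtain ⟨wm, hwm⟩ : ∃ w, w = km * V := ⟨_, rfl⟩
  obtain ⟨p, hp⟩ : ∃ w, w = lp * V := ⟨_, rfl⟩
  obtain ⟨q, hq⟩ : ∃ w, w = lm * V := ⟨_, rfl⟩
  have e1 : 1 - x (n + 1) * y (n + 1) = u * wp := by
    rw [hu, hwp, hkp]; linear_combination (-X * kp) * hU
  have e2 : 1 - x (n - 1) * y (n - 1) = u * wm := by
    rw [hu, hwm, hkm]; linear_combination (-X * km) * hU
  have e3 : y (n + 1) + r * x (n - 1) = u * p := by
    rw [hu, hp, hr, hlp]; linear_combination (-X * lp) * hU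
  have e4 : y (n - 1) + r * x (n + 1) = u * q := by
    rw [hu, hq, hr, hlm]; linear_combination (-X * lm) * hU
  have e5 : p * x (n + 1) - q * x (n - 1) - (wm - wp) = 0 := by
    apply mul_left_cancel₀ hu0
    linear_combination e2 - e1 - x (n + 1) * e3 + x (n - 1) * e4
  have hU' : V * d⁄dX F U + U * d⁄dX F V = 0 := by
    have := congrArg (d⁄dX F) hU
    simpa [Derivation.leibniz] using this
  have Hx0 := H.x0
  have Hy0 := H.y0
  have Hxp := H.xp
  have Hyp := H.yp
  have Hxm := H.xm
  have Hym := H.ym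
  rw [← hVdef] at Hx0 Hy0 Hxp Hxm
  have dU : d⁄dX F U = -U ^ 2 * d⁄dX F V := by
    linear_combination U * hU' - d⁄dX F U * hU
  have du : d⁄dX F u = (r - u ^ 2) * (x (n + 1) - x (n - 1)) := by
    have : d⁄dX F u = U + X * d⁄dX F U := by
      rw [hu]; simp [Derivation.leibniz]; ring
    rw [this, dU, hu, hr]
    linear_combination (-U ^ 2) * Hx0 - (U + 0 - U * y n * (x (n + 1) - x (n - 1))) * hU
  have dr : d⁄dX F r = (u ^ 2 - r) * (p - q) := by
    have : d⁄dX F r = U * d⁄dX F (y n) + y n * d⁄dX F U := by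
      rw [hr]; simp [Derivation.leibniz]; ring
    apply mul_left_cancel₀ hX
    rw [this, dU]
    have e34 : y (n + 1) - y (n - 1) - r * (x (n + 1) - x (n - 1)) = u * (p - q) := by
      linear_combination e3 - e4
    have : X * ((u ^ 2 - r) * (p - q)) = V * (u ^ 2 - r) * (u * (p - q)) := by
      rw [hu]; linear_combination (-X * ((X * U) ^ 2 - r) * (p - q)) * hU
    rw [this, ← e34, hu, hr]
    linear_combination U * Hy0 - y n * U ^ 2 * Hx0 - (U * y n +
      U * X ^ 2 * (y (n + 1) - y (n - 1) - y n * U * (x (n + 1) - x (n - 1)))) * hU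
  have dxp : d⁄dX F (x (n + 1)) = wp * (u * x (n + 2) - 1) := by
    apply mul_left_cancel₀ hX
    rw [Hxp, e1, hu]
    linear_combination (-X * wp) * hU
  have dyp : d⁄dX F (y (n + 1)) = wp * (u * y (n + 2) - r) := by
    apply mul_left_cancel₀ hX
    rw [Hyp, e1, hu, hr]
    ring
  have dxm : d⁄dX F (x (n - 1)) = wm * (1 - u * x (n - 2)) := by
    apply mul_left_cancel₀ hX
    rw [Hxm, e2, hu]
    linear_combination (X * wm) * hU
  have dym : d⁄dX F (y (n - 1)) = wm * (r - u * y (n - 2)) := by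
    apply mul_left_cancel₀ hX
    rw [Hym, e2, hu, hr]
    ring
  have f1 := congrArg (d⁄dX F) e1
  have f2 := congrArg (d⁄dX F) e2
  have f3 := congrArg (d⁄dX F) e3
  have f4 := congrArg (d⁄dX F) e4
  simp only [map_sub, map_add, Derivation.leibniz, smul_eq_mul, derivative_one, du, dr, dxp, dyp,
    dxm, dym] at f1 f2 f3 f4
  refine ⟨wp, wm, p, q, ?_, e5⟩
  rw [← hu, ← hr]
  constructor
  · simpa [Function.update_of_ne, a1, a2] using du
  · simpa [Function.update_of_ne, a1, a2] using dr
  · simpa [Function.update_of_ne, a1, a3] using dxp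
  · simpa [Function.update_of_ne, a1, a3] using dyp
  · simpa [Function.update_of_ne, a2, a4] using dxm
  · simpa [Function.update_of_ne, a2, a4] using dym
  · simp only [Function.update_self, Function.update_of_ne a1, Function.update_of_ne a2,
      Function.update_of_ne a3]
    apply mul_left_cancel₀ hu0
    linear_combination -f1 + wp * e3
  · simp only [Function.update_self, Function.update_of_ne a1, Function.update_of_ne a2,
      Function.update_of_ne a4]
    apply mul_left_cancel₀ hu0
    linear_combination -f2 - wm * e4
  · simp only [Function.update_self, Function.update_of_ne a3, Function.update_of_ne a4]
    apply mul_left_cancel₀ hu0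
    linear_combination -f3 + (u ^ 2 - r) * e5
  · simp only [Function.update_self, Function.update_of_ne a3, Function.update_of_ne a4]
    apply mul_left_cancel₀ hu0
    linear_combination -f4 + (u ^ 2 - r) * e5
  · intro k hk
    obtain ⟨h0, h1, h2, h3, h4⟩ := ne_of_abs hk
    simpa [Function.update_of_ne, h0, h3, h4] using H.xk k hk
  · intro k hk
    obtain ⟨h0, h1, h2, h3, h4⟩ := ne_of_abs hk
    simpa [Function.update_of_ne, h0, h3, h4] using H.yk k hk

end regular

end TP
namespace TP

open PowerSeries

section final

set_option linter.unusedSectionVars false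

variable {F : Type*} [Field F] [CharZero F]

structure PData (n : ℤ) (aa ap am : F) (a b : ℤ → F) (x y : ℤ → PowerSeries F) : Prop where
  sol : PSol n x y
  hx : ∀ k, k ≠ n → constantCoeff (x k) = a k
  hy : ∀ k, k ≠ n → constantCoeff (y k) = b k
  xp1 : coeff 1 (x (n + 1)) = a (n + 1) * ap
  xm1 : coeff 1 (x (n - 1)) = a (n - 1) * am
  x0 : constantCoeff (x n) = a (n - 1) * a (n + 1) / (a (n - 1) - a (n + 1))
  y0 : constantCoeff (y n) = -1 / (a (n - 1) - a (n + 1))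
  x1 : coeff 1 (x n) = a (n - 1) * a (n + 1) * aa / (a (n - 1) - a (n + 1))

lemma coeff_one_eq (f : PowerSeries F) : coeff 1 f = constantCoeff (d⁄dX F f) := by
  rw [← coeff_zero_eq_constantCoeff_apply, coeff_derivative]; simp

lemma coeff_one_X_mul' (f : PowerSeries F) : coeff 1 (X * f) = constantCoeff f := by
  simp [coeff_one_mul]

lemma rel0 (n : ℤ) (x y : ℤ → PowerSeries F) (H : PSol n x y) :
    (constantCoeff (x n) * coeff 1 (y n) + coeff 1 (x n) * constantCoeff (y n)) *
      (constantCoeff (x (n + 1)) - constantCoeff (x (n - 1))) +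
      constantCoeff (x n) * constantCoeff (y n) *
        (coeff 1 (x (n + 1)) - coeff 1 (x (n - 1))) = 0 := by
  have := congrArg (coeff 1) H.x0
  rw [map_sub, coeff_one_X_mul', ← coeff_one_eq] at this
  simp [coeff_one_mul, pow_two] at this
  linear_combination this

lemma relp (n : ℤ) (x y : ℤ → PowerSeries F) (H : PSol n x y)
    (h : constantCoeff (1 - x (n + 1) * y (n + 1)) = 0) :
    coeff 1 (y (n + 1)) * constantCoeff (x n) = coeff 1 (x (n + 1)) * constantCoeff (y n) := by
  have h1 := congrArg (coeff 1) H.xp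
  have h2 := congrArg (coeff 1) H.yp
  rw [coeff_one_X_mul', ← coeff_one_eq, coeff_one_mul, h] at h1 h2
  rw [h1, h2]
  simp; ring

lemma relm (n : ℤ) (x y : ℤ → PowerSeries F) (H : PSol n x y)
    (h : constantCoeff (1 - x (n - 1) * y (n - 1)) = 0) :
    coeff 1 (y (n - 1)) * constantCoeff (x n) = coeff 1 (x (n - 1)) * constantCoeff (y n) := by
  have h1 := congrArg (coeff 1) H.xm
  have h2 := congrArg (coeff 1) H.ym
  rw [coeff_one_X_mul', ← coeff_one_eq, coeff_one_mul, h] at h1 h2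
  rw [h1, h2]
  simp; ring

variable (n : ℤ) (aa ap am : F) (a b : ℤ → F)

lemma pdata_extra (hb1 : b (n + 1) = (a (n + 1))⁻¹) (hb2 : b (n - 1) = (a (n - 1))⁻¹)
    (hA : a (n + 1) ≠ 0) (hB : a (n - 1) ≠ 0) (hD : a (n - 1) - a (n + 1) ≠ 0)
    (x y : ℤ → PowerSeries F) (H : PData n aa ap am a b x y) :
    (∀ k, 2 ≤ |k - n| →
          coeff 1 (x k) = (1 - a k * b k) * (a (k + 1) - a (k - 1)) ∧
          coeff 1 (y k) = (1 - a k * b k) * (b (k + 1) - b (k - 1))) ∧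
        coeff 1 (y (n + 1)) = -(ap / a (n - 1)) ∧
        coeff 1 (y (n - 1)) = -(am / a (n + 1)) ∧
        coeff 1 (y n) =
          (aa + (a (n + 1) * ap - a (n - 1) * am) / (a (n + 1) - a (n - 1))) /
            (a (n - 1) - a (n + 1)) := by
  have a1 : n + 1 ≠ n := by omega
  have a2 : n - 1 ≠ n := by omega
  have hD' : a (n + 1) - a (n - 1) ≠ 0 := by
    intro h; apply hD; linear_combination -h
  have r0 := rel0 n x y H.sol
  have rp := relp n x y H.sol (by simp [H.hx _ a1, H.hy _ a1, hb1, hA])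
  have rm := relm n x y H.sol (by simp [H.hx _ a2, H.hy _ a2, hb2, hB])
  rw [H.hx _ a1, H.hx _ a2, H.xp1, H.xm1, H.x0, H.y0, H.x1] at r0
  rw [H.xp1, H.x0, H.y0] at rp
  rw [H.xm1, H.x0, H.y0] at rm
  refine ⟨?_, ?_, ?_, ?_⟩
  · intro k hk
    obtain ⟨h0, h1, h2, h3, h4⟩ := ne_of_abs hk
    rw [coeff_one_eq, coeff_one_eq, H.sol.xk k hk, H.sol.yk k hk]
    simp [H.hx _ h0, H.hx _ h3, H.hx _ h4, H.hy _ h0, H.hy _ h3, H.hy _ h4]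
  · field_simp at rp ⊢
    linear_combination rp
  · field_simp at rm ⊢
    linear_combination rm
  · generalize a (n + 1) = A at *
    generalize a (n - 1) = B at *
    generalize coeff 1 (y n) = Y at *
    have hneg : A - B = -(B - A) := by ring
    rw [hneg] at r0 ⊢
    generalize B - A = D at *
    field_simp at r0 ⊢
    apply mul_left_cancel₀ (mul_ne_zero hB hA)
    linear_combination -r0

def SS : F := 2 * aa + (a (n + 1) * ap - a (n - 1) * am) / (a (n + 1) - a (n - 1))

def PP : F := (a (n - 1) * am + a (n + 1) * ap - SS n aa ap am a * a (n - 1)) /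
  (a (n + 1) - a (n - 1))

lemma pdata_exists (hb1 : b (n + 1) = (a (n + 1))⁻¹) (hb2 : b (n - 1) = (a (n - 1))⁻¹)
    (hA : a (n + 1) ≠ 0) (hB : a (n - 1) ≠ 0) (hD : a (n - 1) - a (n + 1) ≠ 0) :
    ∃ x y, PData n aa ap am a b x y := by
  have a1 : n + 1 ≠ n := by omega
  have a2 : n - 1 ≠ n := by omega
  have hD' : a (n + 1) - a (n - 1) ≠ 0 := by
    intro h; apply hD; linear_combination -h
  obtain ⟨x, y, wp, wm, p, q, H, hx, hy, hwp, hwm, hp, hq⟩ :=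
    rsol_exists n (Function.update a n 0)
      (Function.update b n (-(a (n + 1) * a (n - 1))⁻¹)) (-(a (n + 1) * ap)) (a (n - 1) * am)
      (PP n aa ap am a) (PP n aa ap am a - SS n aa ap am a)
  have hxn : constantCoeff (x n) = 0 := by simp [hx]
  have hyn : constantCoeff (y n) = -(a (n + 1) * a (n - 1))⁻¹ := by simp [hy]
  have hxk : ∀ k, k ≠ n → constantCoeff (x k) = a k := fun k hk => by simp [hx, hk]
  have hyk : ∀ k, k ≠ n → constantCoeff (y k) = b k := fun k hk => by simp [hy, hk]
  have hc : Constr n x y wp wm p q := by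
    apply constr_of_rsol n x y wp wm p q H
    · simp [hxn, hxk _ a1, hyk _ a1, hb1, hA]
    · simp [hxn, hxk _ a2, hyk _ a2, hb2, hB]
    · simp only [map_add, map_sub, map_mul, hxn, hyn, hxk _ a2, hyk _ a1, hb1]
      field_simp; ring
    · simp only [map_add, map_sub, map_mul, hxn, hyn, hxk _ a1, hyk _ a2, hb2]
      field_simp; ring
    · simp only [map_add, map_sub, map_mul, hxk _ a1, hxk _ a2, hp, hq, hwp, hwm, PP]
      field_simp; ring
  obtain ⟨U, hU⟩ := X_dvd_iff.mpr hxn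
  have hU0 : constantCoeff U = (a (n - 1) - a (n + 1)) / (a (n - 1) * a (n + 1)) := by
    rw [← coeff_one_X_mul', ← hU, coeff_one_eq, H.du]
    simp only [map_add, map_sub, map_mul, map_pow, hxn, hyn, hxk _ a2, hxk _ a1]
    field_simp; ring
  have hU0' : constantCoeff U ≠ 0 := by
    rw [hU0]; exact div_ne_zero (by first | exact hD | exact mul_ne_zero hB hA) (by first | exact hD | exact mul_ne_zero hB hA)
  have hUV : U * U⁻¹ = 1 := PowerSeries.mul_inv_cancel U hU0'
  generalize U⁻¹ = V at hUV
  have hV0 : constantCoeff V = a (n - 1) * a (n + 1) / (a (n - 1) - a (n + 1)) := by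
    have := congrArg constantCoeff hUV
    rw [map_mul, hU0, map_one] at this
    field_simp at this ⊢
    linear_combination this
  have HP := psol_of_rsol n x y wp wm p q U V H hc hU hUV
  have xp1 : coeff 1 (x (n + 1)) = a (n + 1) * ap := by
    rw [coeff_one_eq, H.xp]; simp [hwp, hxn]
  have xm1 : coeff 1 (x (n - 1)) = a (n - 1) * am := by
    rw [coeff_one_eq, H.xm]; simp [hwm, hxn]
  have y1 : coeff 1 (y n) = (a (n + 1) * a (n - 1))⁻¹ * SS n aa ap am a := by
    rw [coeff_one_eq, H.dr]; simp [hp, hq, hxn, hyn]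
  have r0 := rel0 n _ _ HP
  simp only [Function.update_self, Function.update_of_ne a1, Function.update_of_ne a2,
    coeff_one_mul, map_mul, hyn, hV0, hxk _ a1, hxk _ a2, xp1, xm1, y1, SS] at r0
  refine ⟨_, _, HP, ?_, ?_, ?_, ?_, ?_, ?_, ?_⟩
  · intro k hk
    simp [hk, hxk]
  · intro k hk
    simp [hk, hyk]
  · simpa using xp1
  · simpa [a2] using xm1
  · simpa using hV0
  · simp only [Function.update_self, map_mul, hyn, hV0]
    field_simp
  · simp only [Function.update_self]
    generalize a (n + 1) = A at *
    generalize a (n - 1) = B at *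
    generalize coeff 1 V = Y at *
    have hneg : A - B = -(B - A) := by ring
    rw [hneg] at r0
    generalize B - A = D at *
    field_simp at r0 ⊢
    apply mul_left_cancel₀ (mul_ne_zero (two_ne_zero (α := F)) hD)
    linear_combination r0

lemma rsol_of_pdata (hb1 : b (n + 1) = (a (n + 1))⁻¹) (hb2 : b (n - 1) = (a (n - 1))⁻¹)
    (hA : a (n + 1) ≠ 0) (hB : a (n - 1) ≠ 0) (hD : a (n - 1) - a (n + 1) ≠ 0)
    (x y : ℤ → PowerSeries F) (H : PData n aa ap am a b x y) :
    ∃ U wp wm p q, x n * U = 1 ∧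
      RSol n (Function.update x n (X * U)) (Function.update y n (y n * U)) wp wm p q ∧
      constantCoeff (y n * U) = -(a (n + 1) * a (n - 1))⁻¹ ∧
      constantCoeff wp = -(a (n + 1) * ap) ∧ constantCoeff wm = a (n - 1) * am ∧
      constantCoeff p = PP n aa ap am a ∧
      constantCoeff q = PP n aa ap am a - SS n aa ap am a := by
  have a1 : n + 1 ≠ n := by omega
  have a2 : n - 1 ≠ n := by omega
  have hD' : a (n + 1) - a (n - 1) ≠ 0 := by
    intro h; apply hD; linear_combination -h
  have hV0 : constantCoeff (x n) ≠ 0 := by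
    rw [H.x0]; exact div_ne_zero (by first | exact hD | exact mul_ne_zero hB hA) (by first | exact hD | exact mul_ne_zero hB hA)
  have hUV : x n * (x n)⁻¹ = 1 := PowerSeries.mul_inv_cancel _ hV0
  generalize (x n)⁻¹ = U at hUV
  have hU0 : constantCoeff U = (a (n - 1) - a (n + 1)) / (a (n - 1) * a (n + 1)) := by
    have := congrArg constantCoeff hUV
    rw [map_mul, H.x0, map_one] at this
    field_simp at this ⊢
    linear_combination this
  have hr0 : constantCoeff (y n * U) = -(a (n + 1) * a (n - 1))⁻¹ := by
    rw [map_mul, H.y0, hU0]; field_simp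
  obtain ⟨wp, wm, p, q, HR, e5⟩ := rsol_of_psol n x y U H.sol hUV
    (by simp [H.hx _ a1, H.hy _ a1, hb1, hA]) (by simp [H.hx _ a2, H.hy _ a2, hb2, hB])
    (by rw [map_add, map_mul, hr0, H.hx _ a2, H.hy _ a1, hb1]; field_simp; ring)
    (by rw [map_add, map_mul, hr0, H.hx _ a1, H.hy _ a2, hb2]; field_simp; ring)
  have xp1 := H.xp1
  have xm1 := H.xm1
  have dxp := HR.xp
  have dxm := HR.xm
  have dr := HR.dr
  rw [Function.update_of_ne a1] at dxp
  rw [Function.update_of_ne a2] at dxm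
  rw [coeff_one_eq, dxp] at xp1
  rw [coeff_one_eq, dxm] at xm1
  have hwp : constantCoeff wp = -(a (n + 1) * ap) := by
    simp at xp1; linear_combination -xp1
  have hwm : constantCoeff wm = a (n - 1) * am := by
    simp at xm1; linear_combination xm1
  have e5' := congrArg constantCoeff e5
  simp only [map_sub, map_mul, H.hx _ a1, H.hx _ a2, hwp, hwm, map_zero] at e5'
  have hr1 : coeff 1 (y n * U) = (a (n + 1) * a (n - 1))⁻¹ *
      (constantCoeff p - constantCoeff q) := by
    rw [Function.update_self, Function.update_self] at dr
    rw [coeff_one_eq, dr, map_mul, map_sub, hr0, map_sub]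
    simp
  have hUV1 := congrArg (coeff 1) hUV
  rw [coeff_one_mul, H.x0, H.x1, hU0] at hUV1
  have hY := (pdata_extra n aa ap am a b hb1 hb2 hA hB hD x y H).2.2.2
  rw [coeff_one_mul, hY, H.y0, hU0] at hr1
  have h1 : (coeff 1 (1 : PowerSeries F)) = 0 := by simp [coeff_one]
  rw [h1] at hUV1
  have hU1 : coeff 1 U = - aa * (a (n - 1) - a (n + 1)) / (a (n - 1) * a (n + 1)) := by
    field_simp at hUV1 ⊢
    linear_combination hUV1
  rw [hU1] at hr1
  have hs : constantCoeff p - constantCoeff q = SS n aa ap am a := by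
    rw [SS]
    generalize a (n + 1) = A at *
    generalize a (n - 1) = B at *
    have hneg : A - B = -(B - A) := by ring
    rw [hneg] at hr1 ⊢
    generalize B - A = D at *
    field_simp at hr1 ⊢
    linear_combination -hr1
  have hp : constantCoeff p = PP n aa ap am a := by
    rw [PP, ← hs]
    field_simp
    linear_combination e5'
  exact ⟨U, wp, wm, p, q, hUV, HR, hr0, hwp, hwm, hp, by rw [← hs, ← hp]; ring⟩

lemma pdata_unique (hb1 : b (n + 1) = (a (n + 1))⁻¹) (hb2 : b (n - 1) = (a (n - 1))⁻¹)
    (hA : a (n + 1) ≠ 0) (hB : a (n - 1) ≠ 0) (hD : a (n - 1) - a (n + 1) ≠ 0)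
    (x y x' y' : ℤ → PowerSeries F) (H : PData n aa ap am a b x y)
    (H' : PData n aa ap am a b x' y') : x = x' ∧ y = y' := by
  obtain ⟨U, wp, wm, p, q, hU, HR, h0, h1, h2, h3, h4⟩ :=
    rsol_of_pdata n aa ap am a b hb1 hb2 hA hB hD x y H
  obtain ⟨U', wp', wm', p', q', hU', HR', h0', h1', h2', h3', h4'⟩ :=
    rsol_of_pdata n aa ap am a b hb1 hb2 hA hB hD x' y' H'
  obtain ⟨ex, ey⟩ := rsol_unique n _ _ _ _ _ _ _ _ _ _ _ _ HR HR'
    (by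
      intro k
      rcases eq_or_ne k n with rfl | hk
      · simp
      · rw [Function.update_of_ne hk, Function.update_of_ne hk, H.hx k hk, H'.hx k hk])
    (by
      intro k
      rcases eq_or_ne k n with rfl | hk
      · rw [Function.update_self, Function.update_self, h0, h0']
      · rw [Function.update_of_ne hk, Function.update_of_ne hk, H.hy k hk, H'.hy k hk])
    (h1.trans h1'.symm) (h2.trans h2'.symm) (h3.trans h3'.symm) (h4.trans h4'.symm)
  have eU : U = U' := by
    have := congrFun ex n
    rw [Function.update_self, Function.update_self] at this
    exact mul_left_cancel₀ X_ne_zero this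
  have er := congrFun ey n
  rw [Function.update_self, Function.update_self] at er
  subst eU
  have hU0 : U ≠ 0 := right_ne_zero_of_mul_eq_one hU
  constructor
  · funext k
    rcases eq_or_ne k n with rfl | hk
    · exact mul_right_cancel₀ hU0 (hU.trans hU'.symm)
    · have := congrFun ex k
      rwa [Function.update_of_ne hk, Function.update_of_ne hk] at this
  · funext k
    rcases eq_or_ne k n with rfl | hk
    · exact mul_right_cancel₀ hU0 er
    · have := congrFun ey k
      rwa [Function.update_of_ne hk, Function.update_of_ne hk] at this

end final

end TP

open SingConf

/-- For any `n ∈ ℤ`, any field `F` of characteristic `0`, and any choice of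
`a, a₊, a₋, a_{n+1}, a_{n-1}, a_k, b_k ∈ F` (`|k - n| ≥ 2`; encoded as functions
`a b : ℤ → F` with `b_{n±1} = 1/a_{n±1}`, the values at `n` never being used) with
`a_{n+1} a_{n-1} (a_{n+1} - a_{n-1}) ≠ 0`, the first Toeplitz vector field admits a formal
Laurent solution `(x(t), y(t))` in which only `x_n(t)` and `y_n(t)` have a (simple) pole,
with the stated expansions; all higher coefficients are uniquely determined by these data. -/
theorem statement3 (F : Type*) [Field F] [CharZero F] (n : ℤ)
    (aa ap am : F) (a b : ℤ → F)
    (hb1 : b (n + 1) = (a (n + 1))⁻¹) (hb2 : b (n - 1) = (a (n - 1))⁻¹)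
    (hreg : a (n + 1) * a (n - 1) * (a (n + 1) - a (n - 1)) ≠ 0) :
    ∃ x y : ℤ → LaurentSeries F,
      -- the data characterizing the solution:
      (IsSolT x y ∧
        (∀ k, k ≠ n → BigO (x k) 0 ∧ BigO (y k) 0) ∧
        BigO (x n) (-1) ∧ BigO (y n) (-1) ∧
        (∀ k, 2 ≤ |k - n| → (x k).coeff 0 = a k ∧ (y k).coeff 0 = b k) ∧
        (x (n + 1)).coeff 0 = a (n + 1) ∧ (x (n - 1)).coeff 0 = a (n - 1) ∧
        (y (n + 1)).coeff 0 = (a (n + 1))⁻¹ ∧ (y (n - 1)).coeff 0 = (a (n - 1))⁻¹ ∧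
        (x (n + 1)).coeff 1 = a (n + 1) * ap ∧ (x (n - 1)).coeff 1 = a (n - 1) * am ∧
        (x n).coeff (-1) = a (n - 1) * a (n + 1) / (a (n - 1) - a (n + 1)) ∧
        (y n).coeff (-1) = -1 / (a (n - 1) - a (n + 1)) ∧
        (x n).coeff 0 = a (n - 1) * a (n + 1) * aa / (a (n - 1) - a (n + 1))) ∧
      -- the further displayed coefficients of the expansions:
      ((∀ k, 2 ≤ |k - n| →
          (x k).coeff 1 = (1 - a k * b k) * (a (k + 1) - a (k - 1)) ∧
          (y k).coeff 1 = (1 - a k * b k) * (b (k + 1) - b (k - 1))) ∧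
        (y (n + 1)).coeff 1 = -(ap / a (n - 1)) ∧
        (y (n - 1)).coeff 1 = -(am / a (n + 1)) ∧
        (y n).coeff 0 =
          (aa + (a (n + 1) * ap - a (n - 1) * am) / (a (n + 1) - a (n - 1))) /
            (a (n - 1) - a (n + 1))) ∧
      -- uniqueness: any formal Laurent solution with the same characterizing data coincides
      -- with `(x, y)`:
      (∀ x' y' : ℤ → LaurentSeries F,
        (IsSolT x' y' ∧
          (∀ k, k ≠ n → BigO (x' k) 0 ∧ BigO (y' k) 0) ∧
          BigO (x' n) (-1) ∧ BigO (y' n) (-1) ∧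
          (∀ k, 2 ≤ |k - n| → (x' k).coeff 0 = a k ∧ (y' k).coeff 0 = b k) ∧
          (x' (n + 1)).coeff 0 = a (n + 1) ∧ (x' (n - 1)).coeff 0 = a (n - 1) ∧
          (y' (n + 1)).coeff 0 = (a (n + 1))⁻¹ ∧ (y' (n - 1)).coeff 0 = (a (n - 1))⁻¹ ∧
          (x' (n + 1)).coeff 1 = a (n + 1) * ap ∧ (x' (n - 1)).coeff 1 = a (n - 1) * am ∧
          (x' n).coeff (-1) = a (n - 1) * a (n + 1) / (a (n - 1) - a (n + 1)) ∧
          (y' n).coeff (-1) = -1 / (a (n - 1) - a (n + 1)) ∧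
          (x' n).coeff 0 = a (n - 1) * a (n + 1) * aa / (a (n - 1) - a (n + 1))) →
        x' = x ∧ y' = y) := by
  have hA : a (n + 1) ≠ 0 := fun h => hreg (by rw [h]; ring)
  have hB : a (n - 1) ≠ 0 := fun h => hreg (by rw [h]; ring)
  have hD : a (n - 1) - a (n + 1) ≠ 0 := fun h => hreg (by
    linear_combination -(a (n + 1) * a (n - 1)) * h)
  have a1 : n + 1 ≠ n := by omega
  have a2 : n - 1 ≠ n := by omega
  have c0 : ∀ g : PowerSeries F, (g : LaurentSeries F).coeff 0 = PowerSeries.constantCoeff g := by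
    intro g
    have := TP.coe_coeff_nat g 0
    rwa [Nat.cast_zero, PowerSeries.coeff_zero_eq_constantCoeff_apply] at this
  have c1 : ∀ g : PowerSeries F, (g : LaurentSeries F).coeff 1 = PowerSeries.coeff 1 g := by
    intro g
    have := TP.coe_coeff_nat g 1
    rwa [Nat.cast_one] at this
  have s0 : ∀ g : PowerSeries F, (TP.sg F * (g : LaurentSeries F)).coeff (-1) =
      PowerSeries.constantCoeff g := by
    intro g
    rw [TP.sg_mul_coeff, show (-1 + 1 : ℤ) = 0 by norm_num, c0]
  have s1 : ∀ g : PowerSeries F, (TP.sg F * (g : LaurentSeries F)).coeff 0 =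
      PowerSeries.coeff 1 g := by
    intro g
    rw [TP.sg_mul_coeff, show (0 + 1 : ℤ) = 1 by norm_num, c1]
  obtain ⟨x, y, H⟩ := TP.pdata_exists n aa ap am a b hb1 hb2 hA hB hD
  obtain ⟨e1, e2, e3, e4⟩ := TP.pdata_extra n aa ap am a b hb1 hb2 hA hB hD x y H
  refine ⟨TP.lift n x, TP.lift n y, ⟨(TP.isSol_lift n x y).mpr H.sol, ?_, ?_, ?_, ?_, ?_, ?_,
    ?_, ?_, ?_, ?_, ?_, ?_, ?_⟩, ⟨?_, ?_, ?_, ?_⟩, ?_⟩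
  · intro k hk
    rw [TP.lift_ne n x k hk, TP.lift_ne n y k hk]
    exact ⟨TP.bigO_coe _, TP.bigO_coe _⟩
  · rw [TP.lift_n]; exact TP.bigO_sg _
  · rw [TP.lift_n]; exact TP.bigO_sg _
  · intro k hk
    have hk' := (TP.ne_of_abs hk).1
    rw [TP.lift_ne n x k hk', TP.lift_ne n y k hk', c0, c0]
    exact ⟨H.hx k hk', H.hy k hk'⟩
  · rw [TP.lift_ne n x _ a1, c0, H.hx _ a1]
  · rw [TP.lift_ne n x _ a2, c0, H.hx _ a2]
  · rw [TP.lift_ne n y _ a1, c0, H.hy _ a1, hb1]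
  · rw [TP.lift_ne n y _ a2, c0, H.hy _ a2, hb2]
  · rw [TP.lift_ne n x _ a1, c1, H.xp1]
  · rw [TP.lift_ne n x _ a2, c1, H.xm1]
  · rw [TP.lift_n, s0, H.x0]
  · rw [TP.lift_n, s0, H.y0]
  · rw [TP.lift_n, s1, H.x1]
  · intro k hk
    have hk' := (TP.ne_of_abs hk).1
    rw [TP.lift_ne n x k hk', TP.lift_ne n y k hk', c1, c1]
    exact e1 k hk
  · rw [TP.lift_ne n y _ a1, c1, e2]
  · rw [TP.lift_ne n y _ a2, c1, e3]
  · rw [TP.lift_n, s1, e4]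
  · rintro x' y' ⟨hs, hreg', hxn, hyn, hk0, hxp, hxm, hyp, hym, hxp1, hxm1, hx0, hy0, hx1⟩
    have key : ∀ z : ℤ → LaurentSeries F, (∀ k, k ≠ n → BigO (z k) 0) → BigO (z n) (-1) →
        ∃ Z : ℤ → PowerSeries F, z = TP.lift n Z := by
      intro z h1 h2
      have : ∀ k, ∃ g : PowerSeries F, z k = if k = n then TP.sg F * (g : LaurentSeries F)
          else (g : LaurentSeries F) := by
        intro k
        by_cases hk : k = n
        · obtain ⟨g, hg⟩ := TP.exists_coe' (z k) (by rw [hk]; exact h2)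
          exact ⟨g, by rw [if_pos hk, hg]⟩
        · obtain ⟨g, hg⟩ := TP.exists_coe (z k) (h1 k hk)
          exact ⟨g, by rw [if_neg hk, hg]⟩
      choose Z hZ using this
      refine ⟨Z, funext fun k => ?_⟩
      rw [hZ k]
      by_cases hk : k = n
      · subst hk; rw [if_pos rfl, TP.lift_n]
      · rw [if_neg hk, TP.lift_ne n Z k hk]
    obtain ⟨X', rfl⟩ := key x' (fun k hk => (hreg' k hk).1) hxn
    obtain ⟨Y', rfl⟩ := key y' (fun k hk => (hreg' k hk).2) hyn
    rw [TP.lift_ne n _ _ a1, c0] at hxp hyp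
    rw [TP.lift_ne n _ _ a2, c0] at hxm hym
    rw [TP.lift_ne n _ _ a1, c1] at hxp1
    rw [TP.lift_ne n _ _ a2, c1] at hxm1
    rw [TP.lift_n, s0] at hx0 hy0
    rw [TP.lift_n, s1] at hx1
    have H' : TP.PData n aa ap am a b X' Y' := by
      refine ⟨(TP.isSol_lift n X' Y').mp hs, ?_, ?_, hxp1, hxm1, hx0, hy0, hx1⟩
      · intro k hk
        by_cases h1 : k = n + 1
        · rw [h1, hxp]
        by_cases h2 : k = n - 1
        · rw [h2, hxm]
        have := (hk0 k (TP.abs_of_ne hk h1 h2)).1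
        rwa [TP.lift_ne n _ k hk, c0] at this
      · intro k hk
        by_cases h1 : k = n + 1
        · rw [h1, hyp, hb1]
        by_cases h2 : k = n - 1
        · rw [h2, hym, hb2]
        have := (hk0 k (TP.abs_of_ne hk h1 h2)).2
        rwa [TP.lift_ne n _ k hk, c0] at this
    obtain ⟨rfl, rfl⟩ := TP.pdata_unique n aa ap am a b hb1 hb2 hA hB hD X' Y' x y H' H
    exact ⟨rfl, rfl⟩
end
end

section
/- Let (x(t), y(t)) be a formal Laurent solution of the first Toeplitz vector field, let u(t) = (u_{−N},…,u_{−2},u_{−1}+t,u_1+t,u_2,…,u_N), and set Γ_k(t) := Γ_k(x(t),y(t);u(t)), Γ̃_k(t) := Γ̃_k(x(t),y(t);u(t)) and v_k(t) := 1 − x_k(t)y_k(t). Then for every k ∈ ℤ, as identities of formal Laurent series: dΓ_k/dt = v_k(Γ_{k+1} − Γ_{k−1}) + (x_{k+1} − x_{k−1})(x_kΓ̃_k − y_kΓ_k) and dΓ̃_k/dt = v_k(Γ̃_{k+1} − Γ̃_{k−1}) − (y_{k+1} − y_{k−1})(x_kΓ̃_k − y_kΓ_k). In the self-dual case (x_k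 = y_k, u_{−i} = u_i, u(t) = (u_1+t,u_2,…,u_N)) these equations specialize to dΓ_k/dt = v_k(Γ_{k+1} − Γ_{k−1}). Consequently, if (x(t), y(t)) is a formal power-series solution (no poles) with Γ_k(0) = Γ̃_k(0) = 0 for all k ∈ ℤ, then Γ_k(t) = Γ̃_k(t) = 0 identically in t. -/
/-!
Common definitions: the matrices `L₁`, `L₂` of the Toeplitz lattice, their powers,
the recursion polynomials `Γ_k` (here `GamA`), `Γ̃_k` (here `GamB`) and their
self-dual version (`GamSD`), together with the notion of formal Laurent
solutions of the (self-dual) Toeplitz lattice.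
-/

noncomputable section

namespace SingConf

section helpers

variable {A : Type*} [CommRing A]

lemma L1pow_zero_of_lt (x y : ℤ → A) (s : ℕ) : ∀ i j : ℤ, i + s < j → L1pow x y s i j = 0 := by
  induction s with
  | zero =>
    intro i j h
    have : i ≠ j := by rintro rfl; simp at h
    simp [L1pow, this]
  | succ s ih =>
    intro i j h
    push_cast at h
    simp only [L1pow]
    rw [Finset.Icc_eq_empty (by omega), Finset.sum_empty]

lemma L1e_zero (x y : ℤ → A) (i j : ℤ) (h : i + 1 < j) : L1e x y i j = 0 := by
  unfold L1e; rw [if_neg (by omega)]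

lemma sum_Icc_ext (f : ℤ → A) {a b a' b' : ℤ} (ha : a' ≤ a) (hb : b ≤ b')
    (h : ∀ l, a' ≤ l → l ≤ b' → (l < a ∨ b < l) → f l = 0) :
    ∑ l ∈ Finset.Icc a b, f l = ∑ l ∈ Finset.Icc a' b', f l := by
  apply Finset.sum_subset
  · intro l; simp only [Finset.mem_Icc]; omega
  · intro l hl hn
    simp only [Finset.mem_Icc] at hl hn
    exact h l hl.1 hl.2 (by omega)

/-- right recursion, with wide range -/
lemma L1pow_right (x y : ℤ → A) (s : ℕ) (i j a b : ℤ) (ha : a ≤ j - 1) (hb : i + s ≤ b) :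
    L1pow x y (s + 1) i j = ∑ l ∈ Finset.Icc a b, L1pow x y s i l * L1e x y l j := by
  simp only [L1pow]
  apply sum_Icc_ext _ ha hb
  rintro l - - (h | h)
  · rw [L1e_zero x y l j (by omega), mul_zero]
  · rw [L1pow_zero_of_lt x y s i l (by omega), zero_mul]

/-- left recursion, with wide range -/
lemma L1pow_left (x y : ℤ → A) (s : ℕ) : ∀ (i j a b : ℤ), a ≤ j - s → i + 1 ≤ b →
    L1pow x y (s + 1) i j = ∑ l ∈ Finset.Icc a b, L1e x y i l * L1pow x y s l j := by
  induction s with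
  | zero =>
    intro i j a b ha hb
    rw [L1pow_right x y 0 i j (min (j-1) i) (max i j) (by omega) (by simp)]
    simp only [L1pow]
    simp only [ite_mul, one_mul, zero_mul, mul_ite, mul_one, mul_zero]
    rw [Finset.sum_ite_eq, Finset.sum_ite_eq', if_pos (by simp)]
    by_cases h : j ≤ b
    · rw [if_pos (by simp at ha ⊢; omega)]
    · rw [if_neg (by simp; omega), L1e_zero x y i j (by omega)]
  | succ s ih =>
    intro i j a b ha hb
    push_cast at ha
    rw [L1pow_right x y (s + 1) i j (j - 1) (max (i + (s + 1)) (b + s)) le_rfl (by simp)]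
    have h1 : ∀ m ∈ Finset.Icc (j - 1) (max (i + (s + 1)) (b + s)),
        L1pow x y (s + 1) i m * L1e x y m j =
        ∑ l ∈ Finset.Icc a b, L1e x y i l * L1pow x y s l m * L1e x y m j := by
      intro m hm
      simp only [Finset.mem_Icc] at hm
      rw [ih i m a b (by omega) hb, Finset.sum_mul]
    rw [Finset.sum_congr rfl h1, Finset.sum_comm]
    apply Finset.sum_congr rfl
    intro l hl
    simp only [Finset.mem_Icc] at hl
    rw [L1pow_right x y s l j (j - 1) (max (i + (s + 1)) (b + s)) le_rfl (by omega),
      Finset.mul_sum]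
    exact Finset.sum_congr rfl fun m _ => mul_assoc _ _ _

/-- `T(i,j) = ∑_{l ≥ j} x_l (L^s)_{i,l}` -/
def TT (x y : ℤ → A) (s : ℕ) (i j : ℤ) : A :=
  ∑ l ∈ Finset.Icc j (i + s), x l * L1pow x y s i l

/-- `R(i,j) = ∑_{l ≤ i} y_{l-1} (L^s)_{l,j}` -/
def RR (x y : ℤ → A) (s : ℕ) (i j : ℤ) : A :=
  ∑ l ∈ Finset.Icc (j - s) i, y (l - 1) * L1pow x y s l j

lemma sum_Icc_head (f : ℤ → A) (a b : ℤ) (h : b < a → f a = 0) :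
    ∑ l ∈ Finset.Icc a b, f l = f a + ∑ l ∈ Finset.Icc (a + 1) b, f l := by
  by_cases hab : a ≤ b
  · rw [← Finset.insert_Icc_add_one_left_eq_Icc hab, Finset.sum_insert (by simp)]
  · rw [h (by omega), Finset.Icc_eq_empty (by omega), Finset.Icc_eq_empty (by omega)]; simp

lemma sum_Icc_last (f : ℤ → A) (a b : ℤ) (h : b < a → f b = 0) :
    ∑ l ∈ Finset.Icc a b, f l = f b + ∑ l ∈ Finset.Icc a (b - 1), f l := by
  by_cases hab : a ≤ b
  · rw [← Finset.insert_Icc_sub_one_right_eq_Icc hab, Finset.sum_insert (by simp)]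
  · rw [h (by omega), Finset.Icc_eq_empty (by omega), Finset.Icc_eq_empty (by omega)]; simp

lemma TT_step (x y : ℤ → A) (s : ℕ) (i j : ℤ) :
    TT x y s i j = x j * L1pow x y s i j + TT x y s i (j + 1) := by
  unfold TT
  apply sum_Icc_head
  intro h
  rw [L1pow_zero_of_lt x y s i j h, mul_zero]

lemma RR_step (x y : ℤ → A) (s : ℕ) (i j : ℤ) :
    RR x y s i j = y (i - 1) * L1pow x y s i j + RR x y s (i - 1) j := by
  unfold RR
  apply sum_Icc_last
  intro h
  rw [L1pow_zero_of_lt x y s i j (by omega), mul_zero]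

lemma TT_zero (x y : ℤ → A) (s : ℕ) (i j : ℤ) (h : i + s < j) : TT x y s i j = 0 := by
  unfold TT; rw [Finset.Icc_eq_empty (by omega), Finset.sum_empty]

lemma RR_zero (x y : ℤ → A) (s : ℕ) (i j : ℤ) (h : i + s < j) : RR x y s i j = 0 := by
  unfold RR; rw [Finset.Icc_eq_empty (by omega), Finset.sum_empty]

lemma L1pow_succ_T (x y : ℤ → A) (s : ℕ) (i j : ℤ) :
    L1pow x y (s + 1) i j = (1 - x (j - 1) * y (j - 1)) * L1pow x y s i (j - 1)
      - y (j - 1) * TT x y s i j := by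
  simp only [L1pow]
  rw [sum_Icc_head _ _ _ (fun h => by rw [L1pow_zero_of_lt x y s i _ h, zero_mul])]
  simp only [sub_add_cancel]
  have : ∑ l ∈ Finset.Icc j (i + s), L1pow x y s i l * L1e x y l j = - (y (j-1) * TT x y s i j) := by
    unfold TT
    rw [Finset.mul_sum, ← Finset.sum_neg_distrib]
    refine Finset.sum_congr rfl fun l hl => ?_
    simp only [Finset.mem_Icc] at hl
    unfold L1e
    rw [if_pos (by omega), if_neg (by omega)]
    ring
  rw [this]
  unfold L1e
  rw [if_pos (by omega), if_pos (by omega)]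
  ring

lemma L1pow_succ_R (x y : ℤ → A) (s : ℕ) (i j : ℤ) :
    L1pow x y (s + 1) i j = (1 - x i * y i) * L1pow x y s (i + 1) j
      - x i * RR x y s i j := by
  rw [L1pow_left x y s i j (j - s) (i + 1) le_rfl le_rfl,
    sum_Icc_last _ _ _ (fun h => by rw [L1pow_zero_of_lt x y s _ j (by omega), mul_zero])]
  simp only [add_sub_cancel_right]
  have : ∑ l ∈ Finset.Icc (j - s) i, L1e x y i l * L1pow x y s l j = - (x i * RR x y s i j) := by
    unfold RR
    rw [Finset.mul_sum, ← Finset.sum_neg_distrib]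
    refine Finset.sum_congr rfl fun l hl => ?_
    simp only [Finset.mem_Icc] at hl
    unfold L1e
    rw [if_pos (by omega), if_neg (by omega)]
    ring
  rw [this]
  unfold L1e
  rw [if_pos (by omega), if_pos (by omega)]
  simp only [add_sub_cancel_right]
  ring

/-- the flow -/
def Flow (D : Derivation ℤ A A) (x y : ℤ → A) : Prop :=
  ∀ k, D (x k) = (1 - x k * y k) * (x (k + 1) - x (k - 1)) ∧
    D (y k) = (1 - x k * y k) * (y (k + 1) - y (k - 1))

lemma down_ind (P : ℤ → Prop) (b : ℤ) (h0 : ∀ j, b < j → P j) (h1 : ∀ j, P (j + 1) → P j) :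
    ∀ j, P j := by
  have : ∀ n : ℕ, ∀ j, b < j + n → P j := by
    intro n
    induction n with
    | zero => intro j hj; exact h0 j (by simpa using hj)
    | succ n ih => intro j hj; exact h1 j (ih _ (by push_cast at hj; omega))
  intro j
  exact this (b + 1 - j).toNat j (by omega)

lemma up_ind (P : ℤ → Prop) (b : ℤ) (h0 : ∀ j, j < b → P j) (h1 : ∀ j, P (j - 1) → P j) :
    ∀ j, P j := by
  intro j
  have := down_ind (fun j => P (-j)) (-b) (fun j hj => h0 _ (by omega))
    (fun j hj => h1 _ (by convert hj using 1; ring)) (-j)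
  simpa using this

/-- Lax equation, entrywise -/
def Lax (D : Derivation ℤ A A) (x y : ℤ → A) (s : ℕ) : Prop :=
  ∀ i j, D (L1pow x y s i j) =
    (1 - x i * y i) * L1pow x y s (i + 1) j - L1pow x y s (i - 1) j
    + x (i - 1) * y i * L1pow x y s i j
    - (1 - x (j - 1) * y (j - 1)) * L1pow x y s i (j - 1) + L1pow x y s i (j + 1)
    - x (j - 1) * y j * L1pow x y s i j

lemma DTT (D : Derivation ℤ A A) (x y : ℤ → A) (hf : Flow D x y) (s : ℕ) (hL : Lax D x y s)
    (i : ℤ) : ∀ j, D (TT x y s i j) =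
      (1 - x i * y i) * TT x y s (i + 1) j - TT x y s (i - 1) j + x (i - 1) * y i * TT x y s i j
      - x j * (1 - x (j - 1) * y (j - 1)) * L1pow x y s i (j - 1)
      - x (j - 1) * L1pow x y s i j := by
  refine down_ind (fun j => _ = _) (i + s + 1) ?_ ?_
  · intro j hj
    rw [TT_zero, TT_zero, TT_zero, L1pow_zero_of_lt, L1pow_zero_of_lt] <;> first | omega | simp
  · intro j hj
    rw [TT_step x y s i j, TT_step x y s (i + 1) j, TT_step x y s (i - 1) j, map_add, hj,
      Derivation.leibniz, hL, (hf j).1]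
    simp only [add_sub_cancel_right, smul_eq_mul]
    ring

lemma DRR (D : Derivation ℤ A A) (x y : ℤ → A) (hf : Flow D x y) (s : ℕ) (hL : Lax D x y s)
    (j : ℤ) : ∀ i, D (RR x y s i j) =
      y (i - 1) * (1 - x i * y i) * L1pow x y s (i + 1) j + y i * L1pow x y s i j
      - x (j - 1) * y j * RR x y s i j - (1 - x (j - 1) * y (j - 1)) * RR x y s i (j - 1)
      + RR x y s i (j + 1) := by
  refine up_ind (fun i => _ = _) (j - s - 1) ?_ ?_
  · intro i hi
    rw [RR_zero, RR_zero, RR_zero, L1pow_zero_of_lt, L1pow_zero_of_lt] <;> first | omega | simp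
  · intro i hi
    rw [RR_step x y s i j, RR_step x y s i (j + 1), RR_step x y s i (j - 1), map_add, hi,
      Derivation.leibniz, hL, (hf (i - 1)).2]
    simp only [sub_add_cancel, smul_eq_mul]
    ring

lemma Dv (D : Derivation ℤ A A) (x y : ℤ → A) (hf : Flow D x y) (k : ℤ) :
    D (1 - x k * y k) = -((1 - x k * y k) * ((x (k + 1) - x (k - 1)) * y k +
      x k * (y (k + 1) - y (k - 1)))) := by
  rw [map_sub, Derivation.leibniz, (hf k).1, (hf k).2, Derivation.map_one_eq_zero]
  simp only [smul_eq_mul]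
  ring

lemma lax (D : Derivation ℤ A A) (x y : ℤ → A) (hf : Flow D x y) (s : ℕ) : Lax D x y s := by
  induction s with
  | zero =>
    intro i j
    simp only [L1pow]
    have e0 : D (if i = j then 1 else 0) = 0 := by split_ifs <;> simp
    rw [e0]
    by_cases h1 : i = j
    · subst h1; simp [show i ≠ i - 1 by omega]
    by_cases h2 : i + 1 = j
    · subst h2; simp [show i - 1 ≠ i + 1 by omega, show i ≠ i + 1 + 1 by omega]
    by_cases h3 : i - 1 = j
    · subst h3; simp [show i + 1 ≠ i - 1 by omega, show i ≠ i - 1 - 1 by omega, h1]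
    simp [h1, h2, h3, show i ≠ j - 1 by omega, show i ≠ j + 1 by omega]
  | succ s ih =>
    intro i j
    have e1 := TT_step x y s i (j - 1)
    have e2 := TT_step x y s i j
    simp only [sub_add_cancel] at e1
    simp only [L1pow_succ_T x y s, add_sub_cancel_right]
    rw [map_sub, Derivation.leibniz, Derivation.leibniz, Dv D x y hf, (hf (j - 1)).2,
      DTT D x y hf s ih, ih i (j - 1), e1]
    simp only [sub_add_cancel, smul_eq_mul]
    rw [e2]
    ring

/-- `v_k ∑_{l≥k} x_l (L^s)_{k+1,l}` -/
def aa (x y : ℤ → A) (s : ℕ) (k : ℤ) : A := (1 - x k * y k) * TT x y s (k + 1) k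

/-- `v_k ∑_{l≤k+1} y_{l-1} (L^s)_{l,k}` -/
def bb (x y : ℤ → A) (s : ℕ) (k : ℤ) : A := (1 - x k * y k) * RR x y s (k + 1) k

lemma yA (x y : ℤ → A) (s : ℕ) (k : ℤ) :
    y k * TT x y s (k + 1) k = L1pow x y s (k + 1) k - L1pow x y (s + 1) (k + 1) (k + 1) := by
  rw [L1pow_succ_T, add_sub_cancel_right, TT_step x y s (k + 1) k]; ring

lemma xB (x y : ℤ → A) (s : ℕ) (k : ℤ) :
    x k * RR x y s (k + 1) k = L1pow x y s (k + 1) k - L1pow x y (s + 1) k k := by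
  rw [L1pow_succ_R, RR_step x y s (k + 1) k, add_sub_cancel_right]; ring

lemma Daa (D : Derivation ℤ A A) (x y : ℤ → A) (hf : Flow D x y) (s : ℕ) (k : ℤ) :
    D (aa x y s k) = (1 - x k * y k) * (aa x y s (k + 1) - aa x y s (k - 1)) +
      (x (k + 1) - x (k - 1)) * (x k * bb x y s k - y k * aa x y s k) := by
  have hL := lax D x y hf s
  unfold aa bb
  rw [Derivation.leibniz, Dv D x y hf, DTT D x y hf s hL]
  have h1 := yA x y s (k - 1)
  have h2 := xB x y s k
  have h3 := L1pow_succ_T x y s (k + 1) k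
  have h4 := L1pow_succ_R x y s (k + 1) k
  have h5 := TT_step x y s (k + 1 + 1) k
  have h6 := TT_step x y s k (k - 1)
  have h7 := RR_step x y s (k + 1) k
  simp only [smul_eq_mul, add_sub_cancel_right, sub_add_cancel] at *
  rw [h3] at h4
  linear_combination (1 - x k * y k) * ((1 - x (k+1) * y (k+1)) * h5 + h6 - x (k-1) * h1
    + x (k-1) * h2 - x k * h4)

lemma Dbb (D : Derivation ℤ A A) (x y : ℤ → A) (hf : Flow D x y) (s : ℕ) (k : ℤ) :
    D (bb x y s k) = (1 - x k * y k) * (bb x y s (k + 1) - bb x y s (k - 1)) -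
      (y (k + 1) - y (k - 1)) * (x k * bb x y s k - y k * aa x y s k) := by
  have hL := lax D x y hf s
  unfold aa bb
  rw [Derivation.leibniz, Dv D x y hf, DRR D x y hf s hL]
  have h1 := xB x y s (k + 1)
  have h2 := yA x y s k
  have h3 := L1pow_succ_T x y s (k + 1) k
  have h4 := L1pow_succ_R x y s (k + 1) k
  have h5 := RR_step x y s (k + 1 + 1) (k + 1)
  have h6 := RR_step x y s (k + 1) (k - 1)
  have h7 := TT_step x y s (k + 1) k
  simp only [smul_eq_mul, add_sub_cancel_right, sub_add_cancel] at *
  rw [h3] at h4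
  linear_combination (1 - x k * y k) * (-(1 - x (k-1) * y (k-1)) * h6 - h5 + y (k+1) * h1
    - y (k+1) * h2 - y k * h4)

lemma L2pow_eq (x y : ℤ → A) (s : ℕ) : ∀ i j, L2pow x y s i j = L1pow y x s j i := by
  induction s with
  | zero => intro i j; simp only [L2pow, L1pow, eq_comm]
  | succ s ih =>
    intro i j
    rw [L1pow_left y x s j i (i - s) (j + 1) le_rfl le_rfl]
    simp only [L2pow]
    refine Finset.sum_congr rfl fun l _ => ?_
    rw [ih, mul_comm]
    rfl

lemma GamA_eq (N : ℕ) (u x y : ℤ → A) (k : ℤ) : GamA N u x y k =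
    ∑ i ∈ Finset.Icc 1 N, (u i * aa x y (i - 1) k + u (-(i : ℤ)) * bb y x (i - 1) k)
      + (k : A) * x k := by
  unfold GamA
  congr 1
  rw [← Finset.sum_add_distrib, Finset.mul_sum]
  refine Finset.sum_congr rfl fun i hi => ?_
  simp only [Finset.mem_Icc] at hi
  have e : ((i - 1 : ℕ) : ℤ) = (i : ℤ) - 1 := by omega
  unfold aa bb TT RR
  rw [e, show k + 1 + ((i : ℤ) - 1) = k + i by ring, show k - ((i : ℤ) - 1) = k - i + 1 by ring]
  simp only [L2pow_eq]
  ring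

lemma GamB_eq (N : ℕ) (u x y : ℤ → A) (k : ℤ) : GamB N u x y k =
    ∑ i ∈ Finset.Icc 1 N, (u i * bb x y (i - 1) k + u (-(i : ℤ)) * aa y x (i - 1) k)
      + (k : A) * y k := by
  unfold GamB
  congr 1
  rw [← Finset.sum_add_distrib, Finset.mul_sum]
  refine Finset.sum_congr rfl fun i hi => ?_
  simp only [Finset.mem_Icc] at hi
  have e : ((i - 1 : ℕ) : ℤ) = (i : ℤ) - 1 := by omega
  unfold aa bb TT RR
  rw [e, show k + 1 + ((i : ℤ) - 1) = k + i by ring, show k - ((i : ℤ) - 1) = k - i + 1 by ring]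
  simp only [L2pow_eq]
  ring

lemma Flow.symm {D : Derivation ℤ A A} {x y : ℤ → A} (h : Flow D x y) : Flow D y x := by
  intro k
  rw [mul_comm (y k)]
  exact ⟨(h k).2, (h k).1⟩

lemma aa_zero (x y : ℤ → A) (k : ℤ) : aa x y 0 k = (1 - x k * y k) * x (k + 1) := by
  unfold aa
  rw [TT_step, TT_step, TT_zero _ _ _ _ _ (by simp)]
  simp [L1pow]

lemma bb_zero (x y : ℤ → A) (k : ℤ) : bb x y 0 k = (1 - x k * y k) * y (k - 1) := by
  unfold bb
  rw [RR_step, RR_step, RR_zero _ _ _ _ _ (by simp)]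
  simp [L1pow]

lemma sum_ite_one (N : ℕ) (hN : 1 ≤ N) (f : ℕ → A) :
    ∑ i ∈ Finset.Icc 1 N, (if i = 1 then (1 : A) else 0) * f i = f 1 := by
  simp [ite_mul, hN]

lemma DGam (D : Derivation ℤ A A) (N : ℕ) (hN : 1 ≤ N) (u x y : ℤ → A) (hf : Flow D x y)
    (hu : ∀ i : ℕ, 1 ≤ i → D (u i) = (if i = 1 then 1 else 0) ∧
      D (u (-(i : ℤ))) = if i = 1 then 1 else 0) (k : ℤ) :
    D (GamA N u x y k) = (1 - x k * y k) * (GamA N u x y (k + 1) - GamA N u x y (k - 1)) +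
      (x (k + 1) - x (k - 1)) * (x k * GamB N u x y k - y k * GamA N u x y k) ∧
    D (GamB N u x y k) = (1 - x k * y k) * (GamB N u x y (k + 1) - GamB N u x y (k - 1)) -
      (y (k + 1) - y (k - 1)) * (x k * GamB N u x y k - y k * GamA N u x y k) := by
  have hk : D (k : A) = 0 := by simp
  simp only [GamA_eq, GamB_eq, map_add, map_sum, Derivation.leibniz, smul_eq_mul, hk,
    Daa D x y hf, Dbb D x y hf, Daa D y x hf.symm, Dbb D y x hf.symm, (hf k).1, (hf k).2]
  constructor
  · have h1 : ∀ i ∈ Finset.Icc 1 N,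
      u i * ((1 - x k * y k) * (aa x y (i - 1) (k + 1) - aa x y (i - 1) (k - 1)) +
        (x (k + 1) - x (k - 1)) * (x k * bb x y (i - 1) k - y k * aa x y (i - 1) k)) +
        aa x y (i - 1) k * D (u i) +
      (u (-(i : ℤ)) * ((1 - y k * x k) * (bb y x (i - 1) (k + 1) - bb y x (i - 1) (k - 1)) -
        (x (k + 1) - x (k - 1)) * (y k * bb y x (i - 1) k - x k * aa y x (i - 1) k)) +
        bb y x (i - 1) k * D (u (-(i : ℤ)))) =
      (1 - x k * y k) * ((u i * aa x y (i - 1) (k + 1) + u (-(i : ℤ)) * bb y x (i - 1) (k + 1)) -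
        (u i * aa x y (i - 1) (k - 1) + u (-(i : ℤ)) * bb y x (i - 1) (k - 1))) +
      (x (k + 1) - x (k - 1)) *
        (x k * (u i * bb x y (i - 1) k + u (-(i : ℤ)) * aa y x (i - 1) k) -
         y k * (u i * aa x y (i - 1) k + u (-(i : ℤ)) * bb y x (i - 1) k)) +
      (if i = 1 then (1 : A) else 0) * (aa x y (i - 1) k + bb y x (i - 1) k) := by
      intro i hi
      obtain ⟨e1, e2⟩ := hu i (Finset.mem_Icc.1 hi).1
      rw [e1, e2]; ring
    rw [Finset.sum_congr rfl h1, Finset.sum_add_distrib, sum_ite_one N hN,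
      Finset.sum_add_distrib, ← Finset.mul_sum, ← Finset.mul_sum, Finset.sum_sub_distrib,
      Finset.sum_sub_distrib, ← Finset.mul_sum, ← Finset.mul_sum, Nat.sub_self, aa_zero, bb_zero]
    push_cast
    ring
  · have h1 : ∀ i ∈ Finset.Icc 1 N,
      u i * ((1 - x k * y k) * (bb x y (i - 1) (k + 1) - bb x y (i - 1) (k - 1)) -
        (y (k + 1) - y (k - 1)) * (x k * bb x y (i - 1) k - y k * aa x y (i - 1) k)) +
        bb x y (i - 1) k * D (u i) +
      (u (-(i : ℤ)) * ((1 - y k * x k) * (aa y x (i - 1) (k + 1) - aa y x (i - 1) (k - 1)) +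
        (y (k + 1) - y (k - 1)) * (y k * bb y x (i - 1) k - x k * aa y x (i - 1) k)) +
        aa y x (i - 1) k * D (u (-(i : ℤ)))) =
      (1 - x k * y k) * ((u i * bb x y (i - 1) (k + 1) + u (-(i : ℤ)) * aa y x (i - 1) (k + 1)) -
        (u i * bb x y (i - 1) (k - 1) + u (-(i : ℤ)) * aa y x (i - 1) (k - 1))) -
      (y (k + 1) - y (k - 1)) *
        (x k * (u i * bb x y (i - 1) k + u (-(i : ℤ)) * aa y x (i - 1) k) -
         y k * (u i * aa x y (i - 1) k + u (-(i : ℤ)) * bb y x (i - 1) k)) +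
      (if i = 1 then (1 : A) else 0) * (bb x y (i - 1) k + aa y x (i - 1) k) := by
      intro i hi
      obtain ⟨e1, e2⟩ := hu i (Finset.mem_Icc.1 hi).1
      rw [e1, e2]; ring
    rw [Finset.sum_congr rfl h1, Finset.sum_add_distrib, sum_ite_one N hN,
      Finset.sum_sub_distrib, ← Finset.mul_sum, ← Finset.mul_sum, Finset.sum_sub_distrib,
      Finset.sum_sub_distrib, ← Finset.mul_sum, ← Finset.mul_sum, Nat.sub_self, aa_zero, bb_zero]
    push_cast
    ring

lemma GamB_sd (N : ℕ) (u x : ℤ → A) (hu : ∀ i, u (-i) = u i) (k : ℤ) :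
    GamB N u x x k = GamA N u x x k := by
  rw [GamA_eq, GamB_eq]
  refine congrArg (· + (k : A) * x k) (Finset.sum_congr rfl fun i _ => ?_)
  rw [hu, add_comm]

/-- derivations over the integers -/
abbrev Der (B : Type*) [CommRing B] := Derivation ℤ B B

/-- build a derivation -/
def mkD {B : Type*} [CommRing B] (f : B → B) (h : ∀ a b, f (a + b) = f a + f b)
    (h' : ∀ a b, f (a * b) = a * f b + b * f a) : Der B :=
  Derivation.mk' (AddMonoidHom.toIntLinearMap (AddMonoidHom.mk' f h)) (fun a b => h' a b)

end helpers

section laurent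

variable {K : Type*} [Field K]

/-- Euler operator `t d/dt` on coefficients. -/
def theta (f : LaurentSeries K) : LaurentSeries K where
  coeff n := (n : K) * f.coeff n
  isPWO_support' := f.isPWO_support.mono (by
    intro n hn h
    simp only [Function.mem_support] at hn
    exact hn (by rw [h, mul_zero]))

lemma theta_coeff (f : LaurentSeries K) (n : ℤ) : (theta f).coeff n = (n : K) * f.coeff n := rfl

lemma theta_support (f : LaurentSeries K) : (theta f).support ⊆ f.support := by
  intro n hn h
  exact hn (by rw [theta_coeff, h, mul_zero])

lemma theta_mul (f g : LaurentSeries K) : theta (f * g) = f * theta g + g * theta f := by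
  ext n
  rw [mul_comm g, HahnSeries.coeff_add, theta_coeff, HahnSeries.coeff_mul,
    HahnSeries.coeff_mul_right' g.isPWO_support (theta_support g),
    HahnSeries.coeff_mul_left' f.isPWO_support (theta_support f), Finset.mul_sum,
    ← Finset.sum_add_distrib]
  refine Finset.sum_congr rfl fun ij hij => ?_
  have h : ij.1 + ij.2 = n := by
    exact (Finset.mem_antidiagonal.1 hij).2.2
  rw [theta_coeff, theta_coeff, ← h]
  push_cast
  ring

/-- `d/dt` -/
def DD (K : Type*) [Field K] : Der (LaurentSeries K) :=
  mkD (fun f => HahnSeries.single (-1 : ℤ) (1 : K) * theta f)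
    (fun f g => by
      have : theta (f + g) = theta f + theta g := by ext n; simp [theta_coeff, mul_add]
      rw [this, mul_add])
    (fun f g => by
      simp only [theta_mul]
      ring)

lemma DD_coeff (f : LaurentSeries K) (m : ℤ) :
    (DD K f).coeff m = ((m + 1 : ℤ) : K) * f.coeff (m + 1) := by
  have : DD K f = HahnSeries.single (-1 : ℤ) (1 : K) * theta f := rfl
  rw [this, HahnSeries.coeff_single_mul, theta_coeff, one_mul, sub_neg_eq_add]

lemma BigO.mul {f g : LaurentSeries K} {a b : ℤ} (hf : BigO f a) (hg : BigO g b) :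
    BigO (f * g) (a + b) := by
  intro n hn
  rw [HahnSeries.coeff_mul]
  refine Finset.sum_eq_zero fun ij hij => ?_
  have h : ij.1 + ij.2 = n := by
    exact (Finset.mem_antidiagonal.1 hij).2.2
  by_cases h1 : ij.1 < a
  · rw [hf _ h1, zero_mul]
  · rw [hg _ (by omega), mul_zero]

lemma BigO.add {f g : LaurentSeries K} {a : ℤ} (hf : BigO f a) (hg : BigO g a) :
    BigO (f + g) a := by
  intro n hn
  rw [HahnSeries.coeff_add, hf n hn, hg n hn, add_zero]

lemma BigO.neg {f : LaurentSeries K} {a : ℤ} (hf : BigO f a) : BigO (-f) a := by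
  intro n hn
  rw [HahnSeries.coeff_neg, hf n hn, neg_zero]

lemma BigO.sub {f g : LaurentSeries K} {a : ℤ} (hf : BigO f a) (hg : BigO g a) :
    BigO (f - g) a := by
  rw [sub_eq_add_neg]; exact hf.add hg.neg

/-- power series inside Laurent series -/
def PS (K : Type*) [Field K] : Subring (LaurentSeries K) where
  carrier := {f | BigO f 0}
  mul_mem' hf hg := by simpa using BigO.mul hf hg
  one_mem' := fun n hn => by
    rw [HahnSeries.coeff_one, if_neg (by omega)]
  add_mem' hf hg := BigO.add hf hg
  zero_mem' := fun n hn => by simp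
  neg_mem' hf := BigO.neg hf

lemma mem_PS (f : LaurentSeries K) : f ∈ PS K ↔ BigO f 0 := Iff.rfl

end laurent

section mem

variable {A : Type*} [CommRing A]

lemma L1pow_mem (S : Subring A) (x y : ℤ → A) (hx : ∀ k, x k ∈ S) (hy : ∀ k, y k ∈ S) (s : ℕ) :
    ∀ i j, L1pow x y s i j ∈ S := by
  induction s with
  | zero => intro i j; simp only [L1pow]; split_ifs; exacts [S.one_mem, S.zero_mem]
  | succ s ih =>
    intro i j
    simp only [L1pow]
    refine S.sum_mem fun l _ => S.mul_mem (ih _ _) ?_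
    unfold L1e
    split_ifs
    · exact S.add_mem (S.neg_mem (S.mul_mem (hx _) (hy _))) S.one_mem
    · exact S.add_mem (S.neg_mem (S.mul_mem (hx _) (hy _))) S.zero_mem
    · exact S.zero_mem

lemma aa_mem (S : Subring A) (x y : ℤ → A) (hx : ∀ k, x k ∈ S) (hy : ∀ k, y k ∈ S) (s : ℕ)
    (k : ℤ) : aa x y s k ∈ S :=
  S.mul_mem (S.sub_mem S.one_mem (S.mul_mem (hx _) (hy _)))
    (S.sum_mem fun _ _ => S.mul_mem (hx _) (L1pow_mem S x y hx hy _ _ _))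

lemma bb_mem (S : Subring A) (x y : ℤ → A) (hx : ∀ k, x k ∈ S) (hy : ∀ k, y k ∈ S) (s : ℕ)
    (k : ℤ) : bb x y s k ∈ S :=
  S.mul_mem (S.sub_mem S.one_mem (S.mul_mem (hx _) (hy _)))
    (S.sum_mem fun _ _ => S.mul_mem (hy _) (L1pow_mem S x y hx hy _ _ _))

lemma Gam_mem (S : Subring A) (N : ℕ) (u x y : ℤ → A) (hu : ∀ k, u k ∈ S) (hx : ∀ k, x k ∈ S)
    (hy : ∀ k, y k ∈ S) (k : ℤ) : GamA N u x y k ∈ S ∧ GamB N u x y k ∈ S := by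
  rw [GamA_eq, GamB_eq]
  exact ⟨S.add_mem (S.sum_mem fun _ _ => S.add_mem (S.mul_mem (hu _) (aa_mem S x y hx hy _ _))
      (S.mul_mem (hu _) (bb_mem S y x hy hx _ _))) (S.mul_mem (intCast_mem S k) (hx k)),
    S.add_mem (S.sum_mem fun _ _ => S.add_mem (S.mul_mem (hu _) (bb_mem S x y hx hy _ _))
      (S.mul_mem (hu _) (aa_mem S y x hy hx _ _))) (S.mul_mem (intCast_mem S k) (hy k))⟩

end mem

end SingConf

open SingConf

/-- Let `(x(t), y(t))` be a formal Laurent solution of the first Toeplitz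
vector field and let `u(t) = (u_{-N},…,u_{-1}+t, u_1+t,…,u_N)`. Then the series
`Γ_k(t) := Γ_k(x(t),y(t);u(t))` and `Γ̃_k(t) := Γ̃_k(x(t),y(t);u(t))` satisfy
`Γ̇_k = v_k(Γ_{k+1} - Γ_{k-1}) + (x_{k+1} - x_{k-1})(x_kΓ̃_k - y_kΓ_k)` and
`Γ̇̃_k = v_k(Γ̃_{k+1} - Γ̃_{k-1}) - (y_{k+1} - y_{k-1})(x_kΓ̃_k - y_kΓ_k)`
(stated coefficientwise); in the self-dual case these specialize to
`Γ̇_k = v_k(Γ_{k+1} - Γ_{k-1})`; and if the solution is a power-series solution with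
`Γ_k(0) = Γ̃_k(0) = 0` for all `k`, then `Γ_k(t) = Γ̃_k(t) = 0` identically. -/
theorem statement4 (F : Type*) [Field F] [CharZero F] (N : ℕ) (hN : 1 ≤ N)
    (u : ℤ → F) (huN : u (N : ℤ) ≠ 0) (huN' : u (-(N : ℤ)) ≠ 0)
    (x y : ℤ → LaurentSeries F) (hsol : IsSolT x y)
    -- the time-dependent parameters u(t):
    (ut : ℤ → LaurentSeries F)
    (hut : ∀ i : ℤ, ut i = HahnSeries.C (u i) +
      (if i = 1 ∨ i = -1 then HahnSeries.single (1 : ℤ) (1 : F) else 0))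
    -- Γ_k(t) and Γ̃_k(t):
    (G Gt : ℤ → LaurentSeries F)
    (hG : ∀ k, G k = GamA N ut x y k) (hGt : ∀ k, Gt k = GamB N ut x y k) :
    -- (a) the differential equations:
    (∀ k m : ℤ,
      ((m + 1 : ℤ) : F) * (G k).coeff (m + 1) =
        ((1 - x k * y k) * (G (k + 1) - G (k - 1)) +
          (x (k + 1) - x (k - 1)) * (x k * Gt k - y k * G k)).coeff m ∧
      ((m + 1 : ℤ) : F) * (Gt k).coeff (m + 1) =
        ((1 - x k * y k) * (Gt (k + 1) - Gt (k - 1)) -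
          (y (k + 1) - y (k - 1)) * (x k * Gt k - y k * G k)).coeff m) ∧
    -- (b) the self-dual specialization:
    ((∀ k, x k = y k) → (∀ i : ℤ, u (-i) = u i) →
      ∀ k m : ℤ, ((m + 1 : ℤ) : F) * (G k).coeff (m + 1) =
        ((1 - x k * y k) * (G (k + 1) - G (k - 1))).coeff m) ∧
    -- (c) power-series solutions starting on the invariant manifold stay on it:
    ((∀ k, BigO (x k) 0 ∧ BigO (y k) 0) →
      (∀ k, (G k).coeff 0 = 0 ∧ (Gt k).coeff 0 = 0) →
      ∀ k, G k = 0 ∧ Gt k = 0) := by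
  have hflow : Flow (DD F) x y := by
    intro k
    constructor
    · ext m; rw [DD_coeff]; exact (hsol k m).1
    · ext m; rw [DD_coeff]; exact (hsol k m).2
  have hDC : ∀ c : F, DD F (HahnSeries.C c) = 0 := by
    intro c
    ext m
    rw [DD_coeff, HahnSeries.C_apply, HahnSeries.coeff_zero]
    by_cases h : m + 1 = 0
    · rw [h]; simp
    · rw [HahnSeries.coeff_single_of_ne h, mul_zero]
  have hDt : DD F (HahnSeries.single (1 : ℤ) (1 : F)) = 1 := by
    ext m
    rw [DD_coeff, HahnSeries.coeff_one]
    by_cases h : m = 0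
    · subst h; simp
    · rw [HahnSeries.coeff_single_of_ne (by omega), mul_zero, if_neg h]
  have hDu : ∀ i : ℕ, 1 ≤ i → DD F (ut i) = (if i = 1 then 1 else 0) ∧
      DD F (ut (-(i : ℤ))) = if i = 1 then 1 else 0 := by
    intro i hi
    rw [hut, hut, map_add, map_add, hDC, hDC]
    by_cases h : i = 1
    · subst h; simp [hDt]
    · simp [h, show (i : ℤ) ≠ -1 by omega, show -(i : ℤ) ≠ 1 by omega]
  have hD := DGam (DD F) N hN ut x y hflow hDu
  simp only [← hG, ← hGt] at hD
  have ha : ∀ k m : ℤ,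
      ((m + 1 : ℤ) : F) * (G k).coeff (m + 1) =
        ((1 - x k * y k) * (G (k + 1) - G (k - 1)) +
          (x (k + 1) - x (k - 1)) * (x k * Gt k - y k * G k)).coeff m ∧
      ((m + 1 : ℤ) : F) * (Gt k).coeff (m + 1) =
        ((1 - x k * y k) * (Gt (k + 1) - Gt (k - 1)) -
          (y (k + 1) - y (k - 1)) * (x k * Gt k - y k * G k)).coeff m := by
    intro k m
    rw [← DD_coeff, ← DD_coeff, (hD k).1, (hD k).2]
    exact ⟨rfl, rfl⟩
  refine ⟨ha, ?_, ?_⟩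
  · intro hxy hu k m
    have hxy' : x = y := funext hxy
    subst hxy'
    have hus : ∀ i : ℤ, ut (-i) = ut i := by
      intro i
      rw [hut, hut, hu]
      congr 1
      refine if_congr ?_ rfl rfl
      omega
    have hGG : Gt k = G k := by
      rw [hG, hGt, GamB_sd N ut x hus k]
    rw [(ha k m).1, hGG, sub_self, mul_zero, add_zero]
  · intro hps h0
    have hutm : ∀ k, ut k ∈ PS F := by
      intro k
      rw [hut, mem_PS]
      refine BigO.add ?_ ?_
      · intro n hn
        rw [HahnSeries.C_apply, HahnSeries.coeff_single_of_ne (by omega)]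
      · intro n hn
        split_ifs
        · rw [HahnSeries.coeff_single_of_ne (by omega)]
        · simp
    have hxm : ∀ k, x k ∈ PS F := fun k => (hps k).1
    have hym : ∀ k, y k ∈ PS F := fun k => (hps k).2
    have hmem := Gam_mem (PS F) N ut x y hutm hxm hym
    simp only [← hG, ← hGt] at hmem
    have hall : ∀ n : ℕ, ∀ k, BigO (G k) n ∧ BigO (Gt k) n := by
      intro n
      induction n with
      | zero => intro k; exact ⟨(hmem k).1, (hmem k).2⟩
      | succ n ih =>
        have hb : ∀ {f g : LaurentSeries F}, f ∈ PS F → BigO g n → BigO (f * g) n := by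
          intro f g hf hg
          simpa using BigO.mul ((mem_PS f).1 hf) hg
        have hv : ∀ k, 1 - x k * y k ∈ PS F := fun k =>
          (PS F).sub_mem (PS F).one_mem ((PS F).mul_mem (hxm k) (hym k))
        have hw : ∀ k, BigO (x k * Gt k - y k * G k) n := fun k =>
          (hb (hxm k) (ih k).2).sub (hb (hym k) (ih k).1)
        have hlast : ∀ k, (G k).coeff n = 0 ∧ (Gt k).coeff n = 0 := by
          intro k
          rcases Nat.eq_zero_or_pos n with hn | hn
          · subst hn; exact h0 k
          · have hne : (((n : ℤ) - 1 + 1 : ℤ) : F) ≠ 0 := by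
              rw [sub_add_cancel]
              exact_mod_cast hn.ne'
            have h1 := (ha k (n - 1)).1
            have h2 := (ha k (n - 1)).2
            rw [((hb (hv k) ((ih (k + 1)).1.sub (ih (k - 1)).1)).add
              (hb ((PS F).sub_mem (hxm (k + 1)) (hxm (k - 1))) (hw k))) _ (by omega)] at h1
            rw [((hb (hv k) ((ih (k + 1)).2.sub (ih (k - 1)).2)).sub
              (hb ((PS F).sub_mem (hym (k + 1)) (hym (k - 1))) (hw k))) _ (by omega)] at h2
            have h1' := (mul_eq_zero.1 h1).resolve_left hne
            have h2' := (mul_eq_zero.1 h2).resolve_left hne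
            rw [sub_add_cancel] at h1' h2'
            exact ⟨h1', h2'⟩
        intro k
        constructor
        · intro i hi
          rcases lt_or_eq_of_le (show i ≤ (n : ℤ) by push_cast at hi; omega) with h | h
          · exact (ih k).1 i h
          · rw [h]; exact (hlast k).1
        · intro i hi
          rcases lt_or_eq_of_le (show i ≤ (n : ℤ) by push_cast at hi; omega) with h | h
          · exact (ih k).2 i h
          · rw [h]; exact (hlast k).2
    intro k
    constructor
    · ext i
      exact (hall (i + 1).toNat k).1 i (by omega)
    · ext i
      exact (hall (i + 1).toNat k).2 i (by omega)
end
end
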